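/- arXiv:2006.15200 — 7 statements merged into one kernel-verified Lean document; each statement's English description precedes it below -/
import Mathlib

section
/- There is an absolute constant C > 0 such that for each ε ∈ (0,1) there exists a finite set A of integers, none equal to 0, 1, or −1, with |A| ≤ exp(C·(1/ε)·log(1/ε)), such that, as x → ∞, the number of primes p ≤ x for which no a ∈ A satisfies ℓ_a(p) > p^{1−ε} is o(x/log x). -/
open Filter Asymptotics

noncomputable def Pr (i : ℕ) : ℕ := Nat.nth Nat.Prime i

lemma Pr_prime (i : ℕ) : (Pr i).Prime := Nat.prime_nth_prime i

lemma Pr_inj : Function.Injective Pr := Nat.nth_injective Nat.infinite_setOfPred_prime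

lemma fact_prod {k : ℕ} (u : Fin k → ℕ) (j : Fin k) :
    (∏ i : Fin k, Pr i ^ u i).factorization (Pr j) = u j := by
  rw [Nat.factorization_prod (S := Finset.univ) (g := fun i : Fin k => Pr i ^ u i)
    (fun i _ => pow_ne_zero _ (Pr_prime i).ne_zero)]
  rw [Finset.sum_apply']
  rw [Finset.sum_eq_single j]
  · simp [(Pr_prime j).factorization]
  · intro b _ hb
    have : Pr b ≠ Pr j := fun h => hb (Fin.ext (Pr_inj h))
    simp [(Pr_prime b).factorization, this]
  · simp

noncomputable def DD {k : ℕ} (f : Fin k → ℤ) : ℤ :=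
  ((∏ i : Fin k, Pr i ^ (f i).toNat : ℕ) : ℤ) - ((∏ i : Fin k, Pr i ^ (-f i).toNat : ℕ) : ℤ)

lemma DD_ne {k : ℕ} (f : Fin k → ℤ) (hf : f ≠ 0) : DD f ≠ 0 := by
  intro h
  apply hf
  funext j
  unfold DD at h
  have h2 : (∏ i : Fin k, Pr i ^ (f i).toNat : ℕ) = (∏ i : Fin k, Pr i ^ (-f i).toNat : ℕ) := by
    exact_mod_cast sub_eq_zero.mp h
  have h3 := congrArg (fun n => n.factorization (Pr j)) h2
  simp only [fact_prod] at h3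
  simp only [Pi.zero_apply]
  omega

noncomputable def QQ (k : ℕ) : ℕ := ∏ i : Fin k, Pr i

lemma prod_le {k F : ℕ} (u : Fin k → ℕ) (hu : ∀ i, u i ≤ F) :
    (∏ i : Fin k, Pr i ^ u i) ≤ QQ k ^ F := by
  unfold QQ
  rw [← Finset.prod_pow]
  exact Finset.prod_le_prod' fun i _ => Nat.pow_le_pow_right (Pr_prime i).pos (hu i)

lemma DD_le {k F : ℕ} (f : Fin k → ℤ) (hf : ∀ i, f i ∈ Finset.Icc (-(F:ℤ)) F) :
    (DD f).natAbs ≤ QQ k ^ F := by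
  have h1 := prod_le (F := F) (fun i => (f i).toNat) (fun i => by
    have := Finset.mem_Icc.mp (hf i); omega)
  have h2 := prod_le (F := F) (fun i => (-f i).toNat) (fun i => by
    have := Finset.mem_Icc.mp (hf i); omega)
  unfold DD
  omega

lemma omega_le (n m : ℕ) (hn : n ≠ 0) (h : n ≤ 2 ^ m) : n.primeFactors.card ≤ m := by
  have h1 : 2 ^ n.primeFactors.card ≤ ∏ p ∈ n.primeFactors, p := by
    apply Finset.pow_card_le_prod
    intro p hp
    exact (Nat.prime_of_mem_primeFactors hp).two_le
  have h2 := Nat.le_of_dvd (Nat.pos_of_ne_zero hn) (Nat.prod_primeFactors_dvd n)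
  exact (Nat.pow_le_pow_iff_right (by norm_num : 1 < 2)).mp (h1.trans (h2.trans h))

open Classical in
noncomputable def Bad (k F : ℕ) : Finset ℕ :=
  ((Fintype.piFinset fun _ : Fin k => Finset.Icc (-(F:ℤ)) F).filter (fun f => f ≠ 0)).biUnion
    fun f => (DD f).natAbs.primeFactors

lemma Bad_card (k F : ℕ) : (Bad k F).card ≤ (2 * F + 1) ^ k * (QQ k * F) := by
  classical
  unfold Bad
  refine (Finset.card_biUnion_le_card_mul _ _ (QQ k * F) ?_).trans ?_
  · intro f hf
    rw [Finset.mem_filter, Fintype.mem_piFinset] at hf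
    apply omega_le
    · exact Int.natAbs_ne_zero.mpr (DD_ne f hf.2)
    · refine (DD_le f hf.1).trans ?_
      rw [pow_mul]
      exact Nat.pow_le_pow_left Nat.lt_two_pow_self.le _
  · apply Nat.mul_le_mul_right
    refine (Finset.card_filter_le _ _).trans ?_
    rw [Fintype.card_piFinset]
    simp
    apply Nat.pow_le_pow_left
    omega

lemma mem_Bad {k F p : ℕ} (hp : p.Prime) (g : Fin k → (ZMod p)ˣ)
    (hg : ∀ i, (g i : ZMod p) = (Pr i : ZMod p))
    (hc : Nat.card (Subgroup.closure (Set.range g)) < (F + 1) ^ k) : p ∈ Bad k F := by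
  classical
  have : Fact p.Prime := ⟨hp⟩
  let φ : (Fin k → Fin (F + 1)) → Subgroup.closure (Set.range g) := fun u =>
    ⟨∏ i, g i ^ (u i : ℕ), Subgroup.prod_mem _ fun i _ =>
      Subgroup.pow_mem _ (Subgroup.subset_closure (Set.mem_range_self i)) _⟩
  have : Fintype (Subgroup.closure (Set.range g)) := Fintype.ofFinite _
  obtain ⟨u, v, huv, h⟩ := Fintype.exists_ne_map_eq_of_card_lt φ (by
    rw [← Nat.card_eq_fintype_card]; simpa using hc)
  have h1 : ∏ i, g i ^ (u i : ℕ) = ∏ i, g i ^ (v i : ℕ) := congrArg Subtype.val h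
  let f : Fin k → ℤ := fun i => (u i : ℤ) - (v i : ℤ)
  have e1 : ∏ i, g i ^ (u i : ℕ) = (∏ i, g i ^ (min (u i : ℕ) (v i))) * ∏ i, g i ^ (f i).toNat := by
    rw [← Finset.prod_mul_distrib]
    refine Finset.prod_congr rfl fun i _ => ?_
    rw [← pow_add]; congr 1; simp only [f]; omega
  have e2 : ∏ i, g i ^ (v i : ℕ) = (∏ i, g i ^ (min (u i : ℕ) (v i))) * ∏ i, g i ^ (-f i).toNat := by
    rw [← Finset.prod_mul_distrib]
    refine Finset.prod_congr rfl fun i _ => ?_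
    rw [← pow_add]; congr 1; simp only [f]; omega
  rw [e1, e2] at h1
  have h2 := congrArg (Units.val) (mul_left_cancel h1)
  push_cast at h2
  simp only [hg] at h2
  have hf0 : f ≠ 0 := by
    intro h0
    apply huv
    funext i
    have := congrFun h0 i
    simp only [f, Pi.zero_apply] at this
    apply Fin.ext; omega
  unfold Bad
  rw [Finset.mem_biUnion]
  refine ⟨f, ?_, ?_⟩
  · rw [Finset.mem_filter, Fintype.mem_piFinset]
    refine ⟨fun i => ?_, hf0⟩
    have := (u i).2
    have := (v i).2
    simp only [f, Finset.mem_Icc]; omega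
  · rw [Nat.mem_primeFactors]
    refine ⟨hp, ?_, Int.natAbs_ne_zero.mpr (DD_ne f hf0)⟩
    rw [← Int.natCast_dvd, ← ZMod.intCast_zmod_eq_zero_iff_dvd]
    unfold DD
    push_cast
    rw [h2, sub_self]

lemma avg {G : Type*} [CommGroup G] [Finite G] [IsCyclic G] {k N : ℕ} (hN : 0 < N)
    (g : Fin k → G) (hg : Subgroup.closure (Set.range g) = ⊤) :
    ∃ e : Fin k → Fin N, Real.log (Nat.card G) - Real.log (orderOf (∏ i, g i ^ ((e i : ℕ) + 1))) ≤
      (∑ q ∈ (Nat.card G).primeFactors with q ≤ N, (Nat.card G).factorization q * Real.log q)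
        + (1 / N) * Real.log (Nat.card G) := by
  classical
  set M := Nat.card G with hM
  have hM0 : M ≠ 0 := Nat.card_pos.ne'
  have : Nonempty (Fin N) := ⟨⟨0, hN⟩⟩
  let h : (Fin k → Fin N) → G := fun e => ∏ i, g i ^ ((e i : ℕ) + 1)
  let bad : ℕ → Finset (Fin k → Fin N) := fun q => Finset.univ.filter fun e => h e ^ (M / q) = 1
  -- pointwise
  have hpt : ∀ e, Real.log M - Real.log (orderOf (h e)) ≤
      ∑ q ∈ M.primeFactors, if e ∈ bad q then (M.factorization q * Real.log q : ℝ) else 0 := by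
    intro e
    obtain ⟨I, hI⟩ : orderOf (h e) ∣ M := orderOf_dvd_natCard _
    have hI0 : I ≠ 0 := by rintro rfl; simp at hI; exact hM0 hI
    have ho0 : orderOf (h e) ≠ 0 := by intro h0; rw [h0] at hI; simp at hI; exact hM0 hI
    have : Real.log M - Real.log (orderOf (h e)) = Real.log I := by
      rw [hI]; push_cast
      rw [Real.log_mul (by exact_mod_cast ho0) (by exact_mod_cast hI0)]; ring
    rw [this, Real.log_nat_eq_sum_factorization, Finsupp.sum, Nat.support_factorization]
    have hId : I ∣ M := ⟨_, by rw [mul_comm]; exact hI⟩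
    rw [← Finset.sum_filter]
    have hsub : I.primeFactors ⊆ M.primeFactors.filter (fun q => e ∈ bad q) := by
      intro q hq
      rw [Finset.mem_filter]
      refine ⟨Nat.primeFactors_mono hId hM0 hq, ?_⟩
      simp only [bad, Finset.mem_filter, Finset.mem_univ, true_and]
      rw [← orderOf_dvd_iff_pow_eq_one, hI, Nat.mul_div_assoc _ (Nat.dvd_of_mem_primeFactors hq)]
      exact dvd_mul_right _ _
    refine (Finset.sum_le_sum fun q _ => ?_).trans
      (Finset.sum_le_sum_of_subset_of_nonneg hsub fun q _ _ => ?_)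
    · have := (Nat.factorization_le_iff_dvd hI0 hM0).mpr hId q
      have h2 : (I.factorization q : ℝ) ≤ M.factorization q := by exact_mod_cast this
      exact mul_le_mul_of_nonneg_right h2 (Real.log_natCast_nonneg _)
    · exact mul_nonneg (Nat.cast_nonneg _) (Real.log_natCast_nonneg _)
  -- counting
  have hbad : ∀ q ∈ M.primeFactors, N < q → (bad q).card * N ≤ N ^ k := by
    intro q hq hNq
    have hqp := Nat.prime_of_mem_primeFactors hq
    have hqd := Nat.dvd_of_mem_primeFactors hq
    have hex : ∃ i, g i ^ (M / q) ≠ 1 := by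
      by_contra hcon
      push Not at hcon
      have hall : ∀ a : G, a ^ (M / q) = 1 := by
        intro a
        have : Subgroup.closure (Set.range g) ≤ (powMonoidHom (M / q) : G →* G).ker := by
          rw [Subgroup.closure_le]
          rintro _ ⟨i, rfl⟩
          simpa [MonoidHom.mem_ker] using hcon i
        have := this (by rw [hg]; trivial : a ∈ _)
        simpa [MonoidHom.mem_ker] using this
      obtain ⟨γ, hγ⟩ := IsCyclic.exists_ofOrder_eq_natCard (α := G)
      have := orderOf_dvd_of_pow_eq_one (hall γ)
      rw [hγ] at this
      have h1 := Nat.le_of_dvd (Nat.div_pos (Nat.le_of_dvd (Nat.pos_of_ne_zero hM0) hqd) hqp.pos) this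
      exact absurd h1 (not_le.mpr (Nat.div_lt_self (Nat.pos_of_ne_zero hM0) hqp.one_lt))
    obtain ⟨i, hi⟩ := hex
    have hord : orderOf (g i ^ (M / q)) = q := by
      have : Fact q.Prime := ⟨hqp⟩
      apply orderOf_eq_prime _ hi
      rw [← pow_mul, Nat.div_mul_cancel hqd, hM, pow_card_eq_one']
    have hkey : ∀ e ∈ bad q, ∀ e' ∈ bad q, (∀ j, j ≠ i → e j = e' j) → e = e' := by
      intro e he e' he' hee
      simp only [bad, Finset.mem_filter, Finset.mem_univ, true_and, h] at he he'
      have h3 := he.trans he'.symm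
      rw [← Finset.mul_prod_erase _ _ (Finset.mem_univ i),
        ← Finset.mul_prod_erase _ (fun j => g j ^ ((e' j : ℕ) + 1)) (Finset.mem_univ i)] at h3
      have h4 : ∏ j ∈ Finset.univ.erase i, g j ^ ((e j : ℕ) + 1)
          = ∏ j ∈ Finset.univ.erase i, g j ^ ((e' j : ℕ) + 1) :=
        Finset.prod_congr rfl fun j hj => by rw [hee j (Finset.ne_of_mem_erase hj)]
      rw [h4, mul_pow, mul_pow] at h3
      have h5 := mul_right_cancel h3
      rw [← pow_mul, ← pow_mul, mul_comm, mul_comm _ (M / q), pow_mul, pow_mul,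
        pow_inj_mod, hord] at h5
      have l1 := (e i).2
      have l2 := (e' i).2
      rw [Nat.mod_eq_of_lt (by omega), Nat.mod_eq_of_lt (by omega)] at h5
      funext j
      by_cases hj : j = i
      · subst hj; apply Fin.ext; omega
      · exact hee j hj
    have : (bad q ×ˢ (Finset.univ : Finset (Fin N))).card ≤
        (Finset.univ : Finset (Fin k → Fin N)).card := by
      apply Finset.card_le_card_of_injOn (fun y => Function.update y.1 i y.2) (fun _ _ => Finset.mem_coe.mpr (Finset.mem_univ _))
      rintro ⟨e, t⟩ h1 ⟨e', t'⟩ h2 h3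
      simp only [Finset.coe_product, Set.mem_prod, Finset.mem_coe] at h1 h2
      simp only at h3
      have ht : t = t' := by simpa using congrFun h3 i
      have he : e = e' := by
        apply hkey e h1.1 e' h2.1
        intro j hj
        simpa [hj] using congrFun h3 j
      rw [he, ht]
    simpa using this
  have hNR : (0:ℝ) < N := by exact_mod_cast hN
  have hsum : ∑ e : Fin k → Fin N, (Real.log M - Real.log (orderOf (h e))) ≤
      ∑ e : Fin k → Fin N, ((∑ q ∈ M.primeFactors with q ≤ N, M.factorization q * Real.log q)
        + (1 / N) * Real.log M) := by
    refine (Finset.sum_le_sum fun e _ => hpt e).trans ?_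
    rw [Finset.sum_comm]
    have hlogM : Real.log M = ∑ q ∈ M.primeFactors, (M.factorization q * Real.log q : ℝ) := by
      rw [Real.log_nat_eq_sum_factorization, Finsupp.sum, Nat.support_factorization]
    rw [Finset.sum_const, Finset.card_univ, Fintype.card_pi, Finset.prod_const, Fintype.card_fin,
      Finset.card_univ, Fintype.card_fin, nsmul_eq_mul, hlogM, Finset.sum_filter, Finset.mul_sum,
      ← Finset.sum_add_distrib, Finset.mul_sum]
    refine Finset.sum_le_sum fun q hq => ?_
    have hw : (0:ℝ) ≤ M.factorization q * Real.log q :=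
      mul_nonneg (Nat.cast_nonneg _) (Real.log_natCast_nonneg _)
    set w : ℝ := M.factorization q * Real.log q
    rw [← Finset.sum_filter, Finset.sum_const, nsmul_eq_mul]
    have hfe : (Finset.univ.filter fun e => e ∈ bad q) = bad q := by ext; simp
    rw [hfe]
    split_ifs with hqN
    · have h1 : ((bad q).card : ℝ) ≤ ((N ^ k : ℕ) : ℝ) := by
        exact_mod_cast (Finset.card_le_univ _).trans (by simp)
      have h2 : 0 ≤ 1 / (N:ℝ) * w := by positivity
      calc ((bad q).card : ℝ) * w ≤ ((N ^ k : ℕ) : ℝ) * w := by gcongr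
        _ ≤ _ := by gcongr; linarith
    · have h1 : ((bad q).card : ℝ) * N ≤ ((N ^ k : ℕ) : ℝ) := by
        exact_mod_cast hbad q hq (not_le.mp hqN)
      rw [zero_add, ← mul_assoc ((N ^ k : ℕ) : ℝ)]
      refine mul_le_mul_of_nonneg_right ?_ hw
      rw [mul_one_div, le_div_iff₀ hNR]
      exact h1
  obtain ⟨e, -, he⟩ := Finset.exists_le_of_sum_le Finset.univ_nonempty hsum
  exact ⟨e, he⟩

open Classical in
noncomputable def Smooth (N : ℕ) (z x : ℝ) : Finset ℕ :=
  (Finset.Icc 2 ⌊x⌋₊).filter fun p => ∃ q ∈ Finset.Icc 2 N, z ≤ (q : ℝ) ^ (p - 1).factorization q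

lemma Smooth_card (N : ℕ) (z x : ℝ) (hz : 0 < z) (hx : 0 ≤ x) :
    ((Smooth N z x).card : ℝ) ≤ N * (x / z) := by
  classical
  have h1 : Smooth N z x ⊆ (Finset.Icc 2 N).biUnion fun q =>
      (Finset.Icc 2 ⌊x⌋₊).filter fun p => z ≤ (q : ℝ) ^ (p - 1).factorization q := by
    intro p hp
    simp only [Smooth, Finset.mem_filter] at hp
    obtain ⟨h, q, hq, hh⟩ := hp
    simp only [Finset.mem_biUnion, Finset.mem_filter]
    exact ⟨q, hq, h, hh⟩
  have h2 : ∀ q ∈ Finset.Icc 2 N, (((Finset.Icc 2 ⌊x⌋₊).filter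
      fun p => z ≤ (q : ℝ) ^ (p - 1).factorization q).card : ℝ) ≤ x / z := by
    intro q hq
    have hq2 := (Finset.mem_Icc.mp hq).1
    have hex : ∃ j : ℕ, z ≤ (q:ℝ) ^ j :=
      (pow_unbounded_of_one_lt z (by exact_mod_cast hq2 : (1:ℝ) < q)).imp fun _ h => h.le
    let j := Nat.find hex
    have hj : z ≤ (q:ℝ) ^ j := Nat.find_spec hex
    have hc : ((Finset.Icc 2 ⌊x⌋₊).filter
      fun p => z ≤ (q : ℝ) ^ (p - 1).factorization q).card ≤ ⌊x⌋₊ / q ^ j := by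
      rw [← Nat.Ioc_filter_dvd_card_eq_div]
      apply Finset.card_le_card_of_injOn (fun p => p - 1)
      · intro p hp
        simp only [Finset.coe_filter, Finset.mem_Icc, Set.mem_ofPred_eq] at hp
        simp only [Finset.coe_filter, Finset.mem_Ioc, Set.mem_ofPred_eq]
        refine ⟨by omega, ?_⟩
        exact (pow_dvd_pow q (Nat.find_min' hex hp.2)).trans (Nat.ordProj_dvd _ _)
      · intro a ha b hb hab
        simp only [Finset.coe_filter, Finset.mem_Icc, Set.mem_ofPred_eq] at ha hb
        simp only at hab
        omega
    calc _ ≤ ((⌊x⌋₊ / q ^ j : ℕ) : ℝ) := by exact_mod_cast hc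
      _ ≤ (⌊x⌋₊ : ℝ) / ((q ^ j : ℕ) : ℝ) := Nat.cast_div_le
      _ ≤ x / z := by
        push_cast
        exact div_le_div₀ hx (Nat.floor_le hx) hz hj
  calc ((Smooth N z x).card : ℝ) ≤ ∑ q ∈ Finset.Icc 2 N, (((Finset.Icc 2 ⌊x⌋₊).filter
      fun p => z ≤ (q : ℝ) ^ (p - 1).factorization q).card : ℝ) := by
        exact_mod_cast (Finset.card_le_card h1).trans Finset.card_biUnion_le
    _ ≤ ∑ q ∈ Finset.Icc 2 N, x / z := Finset.sum_le_sum h2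
    _ = ((Finset.Icc 2 N).card : ℝ) * (x / z) := by rw [Finset.sum_const, nsmul_eq_mul]
    _ ≤ N * (x / z) := by
      have : 0 ≤ x / z := by positivity
      gcongr
      simp

lemma smooth_sum {M p N : ℕ} {z x : ℝ} (hz : 1 ≤ z) (hp : 2 ≤ p) (hpx : (p:ℝ) ≤ x)
    (hM : M ∣ p - 1) (hS : p ∉ Smooth N z x) :
    (∑ q ∈ M.primeFactors with q ≤ N, (M.factorization q * Real.log q : ℝ)) ≤ N * Real.log z := by
  have hp1 : p - 1 ≠ 0 := by omega
  have hM0 : M ≠ 0 := by rintro rfl; simp at hM; omega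
  have hlz : 0 ≤ Real.log z := Real.log_nonneg hz
  have h : ∀ q ∈ M.primeFactors.filter (fun q => q ≤ N),
      (M.factorization q * Real.log q : ℝ) ≤ Real.log z := by
    intro q hq
    rw [Finset.mem_filter] at hq
    have hq2 := (Nat.prime_of_mem_primeFactors hq.1).two_le
    have : (q : ℝ) ^ (p - 1).factorization q < z := by
      by_contra hcon
      apply hS
      simp only [Smooth, Finset.mem_filter, Finset.mem_Icc]
      exact ⟨⟨hp, Nat.le_floor hpx⟩, q, ⟨hq2, hq.2⟩, not_lt.mp hcon⟩
    have hqpos : (0:ℝ) < q := by positivity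
    have h1 := Real.log_le_log (by positivity) this.le
    rw [Real.log_pow] at h1
    refine le_trans ?_ h1
    have h2 : (M.factorization q : ℝ) ≤ (p-1).factorization q := by
      exact_mod_cast (Nat.factorization_le_iff_dvd hM0 hp1).mpr hM q
    exact mul_le_mul_of_nonneg_right h2 (Real.log_natCast_nonneg _)
  refine (Finset.sum_le_sum h).trans ?_
  rw [Finset.sum_const, nsmul_eq_mul]
  gcongr
  have : M.primeFactors.filter (fun q => q ≤ N) ⊆ Finset.Icc 1 N := by
    intro q hq
    rw [Finset.mem_filter] at hq
    have hq2 := (Nat.prime_of_mem_primeFactors hq.1).two_le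
    rw [Finset.mem_Icc]; exact ⟨by omega, hq.2⟩
  simpa using Finset.card_le_card this

lemma littleO_of {f : ℝ → ℝ} (hf : ∀ x, 0 ≤ f x) (K δ : ℝ) (hδ : 0 < δ)
    (h : ∀ᶠ x in atTop, f x ≤ K * x ^ (1 - δ)) : f =o[atTop] fun x => x / Real.log x := by
  have h1 : f =O[atTop] fun x : ℝ => x ^ (1 - δ) := by
    refine IsBigO.of_bound K ?_
    filter_upwards [h, eventually_gt_atTop 0] with x hx hx0
    rw [Real.norm_of_nonneg (hf x), Real.norm_of_nonneg (by positivity)]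
    exact hx
  refine h1.trans_isLittleO ?_
  have h2 := isLittleO_log_rpow_atTop hδ
  have h3 := h2.mul_isBigO (isBigO_refl (fun x : ℝ => x ^ (1 - δ) / Real.log x) atTop)
  refine h3.congr' ?_ ?_
  · filter_upwards [eventually_gt_atTop 1] with x hx
    have := Real.log_pos hx
    field_simp
  · filter_upwards [eventually_gt_atTop 1] with x hx
    have := Real.log_pos hx
    rw [← mul_div_assoc, ← Real.rpow_add (by linarith)]
    simp

lemma exists_units {k p : ℕ} (hp : p.Prime) (h : p ∉ (Finset.range k).image Pr) :
    ∃ g : Fin k → (ZMod p)ˣ, ∀ i, (g i : ZMod p) = (Pr i : ZMod p) := by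
  have : Fact p.Prime := ⟨hp⟩
  have h1 : ∀ i : Fin k, (Pr i : ZMod p) ≠ 0 := by
    intro i h0
    rw [ZMod.natCast_eq_zero_iff] at h0
    apply h
    rw [Finset.mem_image]
    exact ⟨i, Finset.mem_range.mpr i.2, ((Nat.prime_dvd_prime_iff_eq hp (Pr_prime i)).mp h0).symm⟩
  exact ⟨fun i => Units.mk0 _ (h1 i), fun i => rfl⟩

lemma bad_bound (k F : ℕ) (y : ℝ) (hy : 1 ≤ y) (hF : (F : ℝ) ≤ y) :
    ((Bad k F).card : ℝ) ≤ 3 ^ k * QQ k * (y ^ k * y) := by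
  calc ((Bad k F).card : ℝ) ≤ (2 * F + 1) ^ k * (QQ k * F) := by exact_mod_cast Bad_card k F
    _ ≤ (3 * y) ^ k * (QQ k * y) := by gcongr; linarith
    _ = _ := by rw [mul_pow]; ring

lemma card_bound {S : Set ℕ} {T : Finset ℕ} (h : ∀ p ∈ S, p ∈ T) : (Nat.card S : ℝ) ≤ T.card := by
  have : S ⊆ (T : Set ℕ) := h
  have h2 := Nat.card_mono T.finite_toSet this
  rw [Nat.card_coe_set_eq, Nat.card_coe_set_eq, Set.ncard_coe_finset] at h2
  rw [Nat.card_coe_set_eq]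
  exact_mod_cast h2

lemma case1 (ε : ℝ) (h0 : 1 / 2 < ε) (h1 : ε < 1) :
    (fun x : ℝ => (Nat.card {p : ℕ |
            Nat.Prime p ∧ (p : ℝ) ≤ x ∧
            ∀ a ∈ ({2} : Finset ℤ), ¬ ((p : ℝ) ^ (1 - ε) < (orderOf ((a : ZMod p)) : ℝ))} : ℝ))
          =o[atTop] (fun x : ℝ => x / Real.log x) := by
  classical
  refine littleO_of (fun x => Nat.cast_nonneg _) (1 + 3 ^ 1 * QQ 1) (2 * ε - 1) (by linarith) ?_
  filter_upwards [eventually_ge_atTop 1] with x hx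
  have hx0 : 0 < x := by linarith
  set y := x ^ (1 - ε) with hy
  have hy1 : 1 ≤ y := Real.one_le_rpow hx (by linarith)
  set F := ⌊y⌋₊
  have hF : (F : ℝ) ≤ y := Nat.floor_le (by linarith)
  have hF' : y < F + 1 := Nat.lt_floor_add_one y
  have hsub := card_bound (S := {p : ℕ |
            Nat.Prime p ∧ (p : ℝ) ≤ x ∧
            ∀ a ∈ ({2} : Finset ℤ), ¬ ((p : ℝ) ^ (1 - ε) < (orderOf ((a : ZMod p)) : ℝ))})
    (T := (Finset.range 1).image Pr ∪ Bad 1 F) (by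
      rintro p ⟨hp, hpx, hpa⟩
      by_contra hcon
      rw [Finset.mem_union, not_or] at hcon
      obtain ⟨g, hg⟩ := exists_units hp hcon.1
      have : Fact p.Prime := ⟨hp⟩
      have hc : (F + 1) ^ 1 ≤ Nat.card (Subgroup.closure (Set.range g)) := by
        by_contra hc
        exact hcon.2 (mem_Bad hp g hg (not_le.mp hc))
      have hr : Set.range g = {g 0} := by
        ext a; simp [Set.mem_range, Fin.exists_fin_one, eq_comm]
      rw [hr, ← Subgroup.zpowers_eq_closure, Nat.card_zpowers, pow_one, ← orderOf_units, hg 0] at hc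
      have hP : Pr ((0 : Fin 1) : ℕ) = 2 := Nat.nth_prime_zero_eq_two
      rw [hP] at hc
      apply hpa 2 (by simp)
      have e1 : (p : ℝ) ^ (1 - ε) ≤ y := Real.rpow_le_rpow (Nat.cast_nonneg _) hpx (by linarith)
      have e2 : ((F : ℝ) + 1) ≤ orderOf ((2 : ℕ) : ZMod p) := by exact_mod_cast hc
      have e3 : ((2 : ℤ) : ZMod p) = ((2 : ℕ) : ZMod p) := by norm_num
      rw [e3]
      linarith)
  refine hsub.trans ?_
  have hb := bad_bound 1 F y hy1 hF
  have hi : (((Finset.range 1).image Pr).card : ℝ) ≤ 1 := by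
    exact_mod_cast Finset.card_image_le.trans (by simp)
  have hyy : y ^ 1 * y = x ^ (1 - (2 * ε - 1)) := by
    rw [pow_one, hy, ← Real.rpow_add hx0]; congr 1; ring
  rw [hyy] at hb
  have hone : 1 ≤ x ^ (1 - (2 * ε - 1)) := Real.one_le_rpow hx (by linarith)
  have hu : (((Finset.range 1).image Pr ∪ Bad 1 F).card : ℝ) ≤
      ((Finset.range 1).image Pr).card + (Bad 1 F).card := by
    exact_mod_cast Finset.card_union_le _ _
  linarith

noncomputable def AA (k N : ℕ) : Finset ℤ :=
  Finset.univ.image fun e : Fin k → Fin N => ((∏ i : Fin k, Pr i ^ ((e i : ℕ) + 1) : ℕ) : ℤ)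

lemma AA_card (k N : ℕ) : (AA k N).card ≤ N ^ k := by
  unfold AA
  exact Finset.card_image_le.trans (by simp)

lemma AA_ne (k N : ℕ) (hk : 0 < k) : ∀ a ∈ AA k N, a ≠ 0 ∧ a ≠ 1 ∧ a ≠ -1 := by
  intro a ha
  simp only [AA, Finset.mem_image, Finset.mem_univ, true_and] at ha
  obtain ⟨e, rfl⟩ := ha
  have h1 := fact_prod (fun i => (e i : ℕ) + 1) ⟨0, hk⟩
  have h0 : (∏ i : Fin k, Pr i ^ ((e i : ℕ) + 1)) ≠ 0 :=
    Finset.prod_ne_zero_iff.mpr fun i _ => pow_ne_zero _ (Pr_prime i).ne_zero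
  have h2 : (∏ i : Fin k, Pr i ^ ((e i : ℕ) + 1)) ≠ 1 := by
    intro h; simp only [h] at h1; simp at h1
  refine ⟨?_, ?_, ?_⟩ <;> omega

lemma case2 (ε : ℝ) (h0 : 0 < ε) (h1 : ε < 1) (k N : ℕ) (hk : 2 / ε ≤ k) (hN : 8 / ε ≤ N) :
    (fun x : ℝ => (Nat.card {p : ℕ |
            Nat.Prime p ∧ (p : ℝ) ≤ x ∧
            ∀ a ∈ AA k N, ¬ ((p : ℝ) ^ (1 - ε) < (orderOf ((a : ZMod p)) : ℝ))} : ℝ))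
          =o[atTop] (fun x : ℝ => x / Real.log x) := by
  classical
  have hkR : (0:ℝ) < k := lt_of_lt_of_le (by positivity) hk
  have hNR : (0:ℝ) < N := lt_of_lt_of_le (by positivity) hN
  have hN0 : 0 < N := by exact_mod_cast hNR
  set δ := min (ε ^ 2 / 4) (ε / (4 * N)) with hδ
  have hδ0 : 0 < δ := lt_min (by positivity) (by positivity)
  have hδ1 : δ < 1 := lt_of_le_of_lt (min_le_left _ _) (by nlinarith)
  refine littleO_of (fun x => Nat.cast_nonneg _) (k + 3 ^ k * QQ k + N) δ hδ0 ?_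
  filter_upwards [eventually_gt_atTop 1] with x hx1
  have hx : 1 ≤ x := hx1.le
  have hx0 : 0 < x := by linarith
  have hlx : 0 < Real.log x := Real.log_pos hx1
  set y := x ^ ((1 - ε / 2) / k) with hy
  set z := x ^ (ε / (4 * N)) with hz
  have hy1 : 1 ≤ y := Real.one_le_rpow hx (div_nonneg (by linarith) hkR.le)
  have hz1 : 1 ≤ z := Real.one_le_rpow hx (by positivity)
  have hyk : y ^ k = x ^ (1 - ε / 2) := by
    rw [hy, ← Real.rpow_natCast, ← Real.rpow_mul hx0.le]; congr 1; field_simp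
  set F := ⌊y⌋₊
  have hF : (F : ℝ) ≤ y := Nat.floor_le (by linarith)
  have hF' : y < F + 1 := Nat.lt_floor_add_one y
  have hsub := card_bound (S := {p : ℕ |
            Nat.Prime p ∧ (p : ℝ) ≤ x ∧
            ∀ a ∈ AA k N, ¬ ((p : ℝ) ^ (1 - ε) < (orderOf ((a : ZMod p)) : ℝ))})
    (T := (Finset.range k).image Pr ∪ Bad k F ∪ Smooth N z x) (by
      rintro p ⟨hp, hpx, hpa⟩
      by_contra hcon
      rw [Finset.mem_union, not_or, Finset.mem_union, not_or] at hcon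
      obtain ⟨⟨hc1, hc2⟩, hc3⟩ := hcon
      obtain ⟨g, hg⟩ := exists_units hp hc1
      have : Fact p.Prime := ⟨hp⟩
      have hc : (F + 1) ^ k ≤ Nat.card (Subgroup.closure (Set.range g)) := by
        by_contra hc
        exact hc2 (mem_Bad hp g hg (not_le.mp hc))
      set Γ := Subgroup.closure (Set.range g) with hΓ
      let g' : Fin k → Γ := fun i => ⟨g i, Subgroup.subset_closure (Set.mem_range_self i)⟩
      have hg' : Subgroup.closure (Set.range g') = ⊤ := by
        have := Subgroup.closure_closure_coe_preimage (k := Set.range g)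
        rw [← this]
        congr 1
        ext a
        simp [g', Subtype.ext_iff]
      obtain ⟨e, he⟩ := avg hN0 g' hg'
      have hdv : Nat.card Γ ∣ p - 1 := by
        have h := Subgroup.card_subgroup_dvd_card Γ
        rwa [Nat.card_eq_fintype_card (α := (ZMod p)ˣ), ZMod.card_units] at h
      have hsm := smooth_sum hz1 hp.two_le hpx hdv hc3
      have hMle : Nat.card Γ ≤ p := (Nat.le_of_dvd (by have := hp.two_le; omega) hdv).trans (by omega)
      have hM0 : (0:ℝ) < Nat.card Γ := by exact_mod_cast Nat.card_pos
      have hlogle : Real.log (Nat.card Γ) ≤ Real.log x :=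
        Real.log_le_log hM0 (le_trans (by exact_mod_cast hMle) hpx)
      have hlogge : (1 - ε / 2) * Real.log x ≤ Real.log (Nat.card Γ) := by
        rw [← Real.log_rpow hx0, ← hyk]
        apply Real.log_le_log (by positivity)
        calc y ^ k ≤ ((F:ℝ) + 1) ^ k := by gcongr
          _ ≤ _ := by exact_mod_cast hc
      have hlz : N * Real.log z = ε / 4 * Real.log x := by
        rw [hz, Real.log_rpow hx0]; field_simp
      have hNl : 1 / (N:ℝ) * Real.log (Nat.card Γ) ≤ ε / 8 * Real.log x := by
        have : 1 / (N:ℝ) ≤ ε / 8 := by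
          rw [div_le_iff₀ h0] at hN
          rw [div_le_div_iff₀ hNR (by norm_num)]; linarith
        have h3 : 0 ≤ Real.log (Nat.card Γ) := Real.log_natCast_nonneg _
        calc _ ≤ ε / 8 * Real.log (Nat.card Γ) := by gcongr
          _ ≤ _ := by gcongr
      have hord : orderOf (∏ i, g' i ^ ((e i : ℕ) + 1)) =
          orderOf ((((∏ i : Fin k, Pr i ^ ((e i : ℕ) + 1) : ℕ) : ℤ) : ZMod p)) := by
        rw [← Subgroup.orderOf_coe, ← orderOf_units]
        congr 1
        push_cast
        refine Finset.prod_congr rfl fun i _ => ?_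
        rw [← hg i]
      rw [hord] at he
      refine hpa ((∏ i : Fin k, Pr i ^ ((e i : ℕ) + 1) : ℕ) : ℤ)
        (Finset.mem_image_of_mem _ (Finset.mem_univ e)) ?_
      have hopos : 0 < orderOf ((((∏ i : Fin k, Pr i ^ ((e i : ℕ) + 1) : ℕ) : ℤ) : ZMod p)) := by
        rw [← hord]; exact orderOf_pos _
      have hp0 : (0:ℝ) < p := by exact_mod_cast hp.pos
      refine (Real.rpow_le_rpow hp0.le hpx (by linarith)).trans_lt ?_
      rw [← Real.log_lt_log_iff (by positivity) (by exact_mod_cast hopos), Real.log_rpow hx0]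
      nlinarith)
  refine hsub.trans ?_
  have hb := bad_bound k F y hy1 hF
  have hi : (((Finset.range k).image Pr).card : ℝ) ≤ k := by
    exact_mod_cast Finset.card_image_le.trans (by simp)
  have hs := Smooth_card N z x (by linarith) hx0.le
  have hyy : y ^ k * y ≤ x ^ (1 - δ) := by
    rw [hyk, hy, ← Real.rpow_add hx0]
    apply Real.rpow_le_rpow_of_exponent_le hx
    have hd : δ ≤ ε ^ 2 / 4 := min_le_left _ _
    have hd2 : (1 - ε / 2) / k ≤ (1 - ε / 2) * (ε / 2) := by
      rw [div_le_iff₀ h0] at hk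
      rw [div_le_iff₀ hkR]
      have : 0 ≤ (1 - ε / 2) := by linarith
      nlinarith
    nlinarith
  have hxz : x / z ≤ x ^ (1 - δ) := by
    have : x / z = x ^ (1 - ε / (4 * N)) := by
      rw [Real.rpow_sub hx0, Real.rpow_one]
    rw [this]
    apply Real.rpow_le_rpow_of_exponent_le hx
    have hd : δ ≤ ε / (4 * N) := min_le_right _ _
    linarith
  have hone : 1 ≤ x ^ (1 - δ) := Real.one_le_rpow hx (by linarith)
  have hu : (((Finset.range k).image Pr ∪ Bad k F ∪ Smooth N z x).card : ℝ) ≤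
      ((Finset.range k).image Pr).card + (Bad k F).card + (Smooth N z x).card := by
    exact_mod_cast (Finset.card_union_le _ _).trans
      (Nat.add_le_add_right (Finset.card_union_le _ _) _)
  calc _ ≤ _ := hu
    _ ≤ k + 3 ^ k * QQ k * (y ^ k * y) + N * (x / z) := by linarith
    _ ≤ k * x ^ (1 - δ) + 3 ^ k * QQ k * x ^ (1 - δ) + N * x ^ (1 - δ) := by
      gcongr
      exact le_mul_of_one_le_right hkR.le hone
    _ = _ := by ring

/-- For each `ε ∈ (0,1)`, there are finite sets `𝒜` of integers (none of them
`0, 1, -1`) of size at most `exp(C (1/ε) log(1/ε))` such that, for almost all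
primes `p`, some `a ∈ 𝒜` has multiplicative order mod `p` exceeding `p^(1-ε)`. -/
theorem stmt_3 :
    ∃ C : ℝ, 0 < C ∧ ∀ ε : ℝ, 0 < ε → ε < 1 →
      ∃ A : Finset ℤ,
        (∀ a ∈ A, a ≠ 0 ∧ a ≠ 1 ∧ a ≠ -1) ∧
        (A.card : ℝ) ≤ Real.exp (C * (1 / ε) * Real.log (1 / ε)) ∧
        (fun x : ℝ => (Nat.card {p : ℕ |
            Nat.Prime p ∧ (p : ℝ) ≤ x ∧
            ∀ a ∈ A, ¬ ((p : ℝ) ^ (1 - ε) < (orderOf ((a : ZMod p)) : ℝ))} : ℝ))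
          =o[atTop] (fun x : ℝ => x / Real.log x) := by
  refine ⟨15, by norm_num, fun ε h0 h1 => ?_⟩
  have hinv : 1 ≤ 1 / ε := by rw [le_div_iff₀ h0]; linarith
  have hlog : 0 ≤ Real.log (1 / ε) := Real.log_nonneg hinv
  by_cases hε : 1 / 2 < ε
  · refine ⟨{2}, by simp, ?_, case1 ε hε h1⟩
    simp only [Finset.card_singleton, Nat.cast_one]
    exact Real.one_le_exp (by positivity)
  · have hε2 : 2 ≤ 1 / ε := by rw [le_div_iff₀ h0]; linarith
    set t := 1 / ε with ht
    have hk1 : 2 / ε ≤ ⌈2 / ε⌉₊ := Nat.le_ceil _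
    have hN1 : 8 / ε ≤ ⌈8 / ε⌉₊ := Nat.le_ceil _
    have hk2 : (⌈2 / ε⌉₊ : ℝ) < 2 / ε + 1 := Nat.ceil_lt_add_one (by positivity)
    have hN2 : (⌈8 / ε⌉₊ : ℝ) < 8 / ε + 1 := Nat.ceil_lt_add_one (by positivity)
    set k := ⌈2 / ε⌉₊
    set N := ⌈8 / ε⌉₊
    have e2 : 2 / ε = 2 * t := by rw [ht]; ring
    have e8 : 8 / ε = 8 * t := by rw [ht]; ring
    have hk0 : 0 < k := Nat.ceil_pos.mpr (by positivity)
    have hN0 : 0 < N := Nat.ceil_pos.mpr (by positivity)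
    have hN0R : (0:ℝ) < N := by exact_mod_cast hN0
    refine ⟨AA k N, AA_ne k N hk0, ?_, case2 ε h0 h1 k N hk1 hN1⟩
    have hNt : (N : ℝ) ≤ t ^ 5 := by
      have : (16:ℝ) ≤ t ^ 4 := by
        calc (16:ℝ) = 2 ^ 4 := by norm_num
          _ ≤ t ^ 4 := by gcongr
      calc (N:ℝ) ≤ 16 * t := by linarith
        _ ≤ t ^ 4 * t := by gcongr
        _ = t ^ 5 := by ring
    have hlN : Real.log N ≤ 5 * Real.log t := by
      have := Real.log_le_log hN0R hNt
      rw [Real.log_pow] at this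
      exact_mod_cast this
    calc ((AA k N).card : ℝ) ≤ (N:ℝ) ^ k := by exact_mod_cast AA_card k N
      _ = Real.exp (k * Real.log N) := by
        rw [Real.exp_nat_mul, Real.exp_log hN0R]
      _ ≤ Real.exp (15 * t * Real.log t) := by
        apply Real.exp_le_exp.mpr
        calc (k:ℝ) * Real.log N ≤ (3 * t) * (5 * Real.log t) := by
              gcongr
              linarith
          _ = _ := by ring
end

section
/- Let ξ(x) be any real-valued function that tends to infinity as x → ∞, and for a prime p let L(p) denote the maximum of the multiplicative orders modulo p of the integers 1, 2, 3, …, ⌊ξ(p)⌋ (taken over those not divisible by p). Then for each fixed ε > 0, as x → ∞, the number of primes p ≤ x with L(p) ≤ p^{1−ε} is o(x/log x). -/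
open Filter Asymptotics

/-- The `E`-smooth part of `m`. -/
def smoothPart (E m : ℕ) : ℕ :=
  ∏ l ∈ m.primeFactors.filter (fun l => l ≤ E), l ^ m.factorization l

open Classical in
lemma fail_count {G : Type*} [CommGroup G] {r : ℕ} (g : Fin r → G) (E n l : ℕ)
    (hl : l.Prime) (hE : E < l) (hpow : ∀ i, ((g i) ^ n) ^ l = 1) (hi : ∃ i, (g i) ^ n ≠ 1) :
    ((Finset.univ : Finset (Fin r → Fin (E+1))).filter
      (fun e : Fin r → Fin (E+1) => (∏ i, g i ^ (e i : ℕ)) ^ n = 1)).card * (E+1) ≤ (E+1)^r := by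
  obtain ⟨i, hi⟩ := hi
  haveI : Fact l.Prime := ⟨hl⟩
  have hord : orderOf ((g i)^n) = l := orderOf_eq_prime (hpow i) hi
  set F := ((Finset.univ : Finset (Fin r → Fin (E+1))).filter
      (fun e => (∏ i, g i ^ (e i : ℕ)) ^ n = 1)) with hF
  have h1 : (F ×ˢ (Finset.univ : Finset (Fin (E+1)))).card ≤
      (Finset.univ : Finset (Fin r → Fin (E+1))).card := by
    apply Finset.card_le_card_of_injOn (fun z => Function.update z.1 i z.2)
    · intro z _; simp
    · rintro ⟨e, c⟩ hz ⟨e', c'⟩ hz' heq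
      simp only [Finset.coe_product, Set.mem_prod, Finset.mem_coe, hF, Finset.mem_filter,
        Finset.mem_univ, true_and, and_true] at hz hz'
      simp only at heq
      have hc : c = c' := by
        have := congrFun heq i
        simpa using this
      have ho : ∀ j, j ≠ i → e j = e' j := by
        intro j hj
        have := congrFun heq j
        simpa [hj] using this
      have hei : e i = e' i := by
        rw [← Finset.mul_prod_erase _ _ (Finset.mem_univ i)] at hz hz'
        have hprod : ∏ x ∈ Finset.univ.erase i, g x ^ (e x : ℕ)
            = ∏ x ∈ Finset.univ.erase i, g x ^ (e' x : ℕ) := by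
          apply Finset.prod_congr rfl
          intro j hj
          rw [ho j (Finset.ne_of_mem_erase hj)]
        rw [hprod, mul_pow] at hz
        rw [mul_pow] at hz'
        have h2 := mul_right_cancel (hz.trans hz'.symm)
        rw [← pow_mul, ← pow_mul, mul_comm, mul_comm _ n, pow_mul, pow_mul] at h2
        rw [pow_inj_mod, hord, Nat.mod_eq_of_lt (by omega), Nat.mod_eq_of_lt (by omega)] at h2
        exact Fin.ext h2
      have : e = e' := by
        funext j
        by_cases hj : j = i
        · rw [hj, hei]
        · exact ho j hj
      simp [this, hc]
  simpa [Finset.card_product] using h1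

lemma index_le {m k : ℕ} (hm : m ≠ 0) (hk : k ∣ m) (P : ℕ → Prop) [DecidablePred P]
    (hP : ∀ l, l.Prime → l ∣ k → P l) :
    k ≤ ∏ l ∈ m.primeFactors, if P l then l ^ m.factorization l else 1 := by
  have hk0 : k ≠ 0 := fun h => hm (by simpa [h] using hk)
  calc k = ∏ l ∈ k.primeFactors, l ^ k.factorization l :=
        (Nat.prod_factorization_pow_eq_self hk0).symm
    _ ≤ ∏ l ∈ k.primeFactors, if P l then l ^ m.factorization l else 1 := by
        apply Finset.prod_le_prod'
        intro l hl
        have hl' := Nat.prime_of_mem_primeFactors hl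
        rw [if_pos (hP l hl' (Nat.dvd_of_mem_primeFactors hl))]
        exact Nat.pow_le_pow_right hl'.pos ((Nat.factorization_le_iff_dvd hk0 hm).2 hk l)
    _ ≤ _ := by
        apply Finset.prod_le_prod_of_subset_of_one_le' (Nat.primeFactors_mono hk hm)
        intro l hl _
        split_ifs
        · exact Nat.one_le_pow _ _ (Nat.prime_of_mem_primeFactors hl).pos
        · exact le_rfl

lemma lemA {G : Type*} [CommGroup G] [Finite G] {r : ℕ} (g : Fin r → G) (E m : ℕ)
    (hm : m = Finset.univ.lcm (fun i => orderOf (g i))) :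
    ∃ e : Fin r → Fin (E+1), m ^ (E+1) ≤
      (orderOf (∏ i, g i ^ (e i : ℕ))) ^ (E+1) * (m * (smoothPart E m) ^ (E+1)) := by
  classical
  have hm0 : m ≠ 0 := by
    rw [hm]; intro h
    rw [Finset.lcm_eq_zero_iff] at h
    obtain ⟨i, _, hi⟩ := h
    exact (orderOf_pos (g i)).ne' hi
  have hdi : ∀ i, orderOf (g i) ∣ m := fun i => hm ▸ Finset.dvd_lcm (Finset.mem_univ i)
  have hgm : ∀ i, g i ^ m = 1 := fun i => orderOf_dvd_iff_pow_eq_one.1 (hdi i)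
  set h : (Fin r → Fin (E+1)) → G := fun e => ∏ i, g i ^ (e i : ℕ) with hh
  have hhm : ∀ e, orderOf (h e) ∣ m := by
    intro e
    apply orderOf_dvd_of_pow_eq_one
    rw [hh]; simp only
    rw [← Finset.prod_pow]
    apply Finset.prod_eq_one
    intro i _
    rw [← pow_mul, mul_comm, pow_mul, hgm, one_pow]
  by_contra hcon
  push Not at hcon
  set k : (Fin r → Fin (E+1)) → ℕ := fun e => m / orderOf (h e) with hk
  have hkm : ∀ e, orderOf (h e) * k e = m := fun e => Nat.mul_div_cancel' (hhm e)
  set W := m * (smoothPart E m) ^ (E+1) with hW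
  have hlt : ∀ e, W < k e ^ (E+1) := by
    intro e
    have := hcon e
    change orderOf (h e) ^ (E+1) * W < m ^ (E+1) at this
    rw [← hkm e, mul_pow] at this
    exact lt_of_mul_lt_mul_left' this
  have hke : ∀ e, k e ≤ ∏ l ∈ m.primeFactors,
      if (h e) ^ (m / l) = 1 then l ^ m.factorization l else 1 := by
    intro e
    apply index_le hm0 ⟨orderOf (h e), by rw [mul_comm]; exact (hkm e).symm⟩
      (fun l => (h e)^(m/l) = 1)
    intro l hl hlk
    obtain ⟨c, hc⟩ := hlk
    apply orderOf_dvd_iff_pow_eq_one.1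
    refine ⟨c, ?_⟩
    rw [← hkm e, hc]
    rw [show orderOf (h e) * (l * c) = l * (orderOf (h e) * c) by ring]
    exact Nat.mul_div_cancel_left _ hl.pos
  have hup : ∏ e, k e ^ (E+1) ≤ W ^ ((E+1)^r) := by
    calc ∏ e, k e ^ (E+1) = (∏ e, k e)^(E+1) := Finset.prod_pow _ _ _
      _ ≤ (∏ e, ∏ l ∈ m.primeFactors,
            if (h e) ^ (m / l) = 1 then l ^ m.factorization l else 1)^(E+1) :=
          Nat.pow_le_pow_left (Finset.prod_le_prod' fun e _ => hke e) _
      _ = ∏ l ∈ m.primeFactors, ((l ^ m.factorization l) ^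
            (Finset.univ.filter (fun e => (h e) ^ (m / l) = 1)).card) ^ (E+1) := by
          rw [Finset.prod_comm, Finset.prod_pow]
          congr 1
          apply Finset.prod_congr rfl
          intro l _
          rw [Finset.prod_ite]; simp
      _ ≤ ∏ l ∈ m.primeFactors, (l ^ m.factorization l *
            (if l ≤ E then l ^ m.factorization l else 1) ^ (E+1)) ^ ((E+1)^r) := by
          apply Finset.prod_le_prod'
          intro l hl
          have hlp := Nat.prime_of_mem_primeFactors hl
          have hw : 1 ≤ l ^ m.factorization l := Nat.one_le_pow _ _ hlp.pos
          split_ifs with hlE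
          · have : (Finset.univ.filter (fun e => (h e) ^ (m / l) = 1)).card ≤ (E+1)^r := by
              refine (Finset.card_filter_le _ _).trans ?_
              simp
            generalize l ^ m.factorization l = w at hw ⊢
            rw [← pow_succ', ← pow_mul, ← pow_mul]
            apply Nat.pow_le_pow_right hw
            nlinarith
          · generalize l ^ m.factorization l = w at hw ⊢
            rw [← pow_mul]
            simp only [one_pow, mul_one]
            apply Nat.pow_le_pow_right hw
            apply fail_count g E (m / l) l hlp (by omega)
            · intro i
              rw [← pow_mul, Nat.div_mul_cancel (Nat.dvd_of_mem_primeFactors hl), hgm]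
            · by_contra hall
              push Not at hall
              have : m ∣ m / l := by
                conv_lhs => rw [hm]
                apply Finset.lcm_dvd
                intro i _
                exact orderOf_dvd_of_pow_eq_one (hall i)
              have h3 := Nat.le_of_dvd (Nat.div_pos (Nat.le_of_mem_primeFactors hl) hlp.pos) this
              have h4 := Nat.div_lt_self (Nat.pos_of_ne_zero hm0) hlp.one_lt
              omega
      _ = W ^ ((E+1)^r) := by
          rw [Finset.prod_pow, Finset.prod_mul_distrib, Finset.prod_pow, hW, smoothPart,
            Finset.prod_filter]
          congr 2
          exact Nat.prod_factorization_pow_eq_self hm0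
  have hlow : W ^ ((E+1)^r) < ∏ e, k e ^ (E+1) := by
    have h5 : ∏ _e : Fin r → Fin (E+1), W < ∏ e, k e ^ (E+1) := by
      apply Finset.prod_lt_prod_of_nonempty
      · intro e _
        rw [hW]
        have : 0 < smoothPart E m := by
          apply Finset.prod_pos
          intro l hl
          exact pow_pos (Nat.prime_of_mem_primeFactors (Finset.mem_filter.1 hl).1).pos _
        positivity
      · intro e _; exact hlt e
      · exact Finset.univ_nonempty
    simpa using h5
  omega

lemma smooth_le {E m n : ℕ} (hm : m ∣ n) (hn : n ≠ 0) {y : ℝ} (hy : 1 ≤ y)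
    (h : ∀ l, l.Prime → l ≤ E → ((l ^ n.factorization l : ℕ) : ℝ) ≤ y) :
    (smoothPart E m : ℝ) ≤ y ^ E := by
  have hm0 : m ≠ 0 := fun h => hn (by simpa [h] using hm)
  unfold smoothPart
  rw [Nat.cast_prod]
  set F := m.primeFactors.filter (fun l => l ≤ E) with hF
  calc ∏ l ∈ F, ((l ^ m.factorization l : ℕ) : ℝ) ≤ ∏ l ∈ F, y := by
        apply Finset.prod_le_prod
        · intros; positivity
        · intro l hl
          rw [hF, Finset.mem_filter] at hl
          have hlp := Nat.prime_of_mem_primeFactors hl.1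
          refine le_trans ?_ (h l hlp hl.2)
          exact_mod_cast Nat.pow_le_pow_right hlp.pos
            ((Nat.factorization_le_iff_dvd hm0 hn).2 hm l)
    _ = y ^ F.card := by simp
    _ ≤ y ^ E := by
        apply pow_le_pow_right₀ hy
        have : F ⊆ Finset.Icc 1 E := by
          intro l hl
          rw [hF, Finset.mem_filter] at hl
          exact Finset.mem_Icc.2 ⟨(Nat.prime_of_mem_primeFactors hl.1).pos, hl.2⟩
        simpa using Finset.card_le_card this

lemma count1_aux (l X : ℕ) (hl : l.Prime) {y : ℝ} (hy : 1 ≤ y) :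
    (((Finset.Ioc 0 X).filter
      (fun n => y < ((l ^ n.factorization l : ℕ) : ℝ))).card : ℝ) ≤ X / y := by
  have hex : ∃ k : ℕ, y < (l : ℝ) ^ k :=
    pow_unbounded_of_one_lt y (by exact_mod_cast hl.one_lt)
  classical
  set k := Nat.find hex with hk
  have hky : y < (l : ℝ) ^ k := Nat.find_spec hex
  have hsub : (Finset.Ioc 0 X).filter (fun n => y < ((l ^ n.factorization l : ℕ) : ℝ)) ⊆
      (Finset.Ioc 0 X).filter (fun n => l ^ k ∣ n) := by
    intro n hn
    rw [Finset.mem_filter] at hn ⊢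
    refine ⟨hn.1, ?_⟩
    have : k ≤ n.factorization l := Nat.find_min' hex (by exact_mod_cast hn.2)
    exact (pow_dvd_pow l this).trans (Nat.ordProj_dvd n l)
  have h1 := Finset.card_le_card hsub
  rw [Nat.Ioc_filter_dvd_card_eq_div] at h1
  calc _ ≤ ((X / l ^ k : ℕ) : ℝ) := by exact_mod_cast h1
    _ ≤ (X : ℝ) / ((l ^ k : ℕ) : ℝ) := Nat.cast_div_le
    _ ≤ X / y := by
        push_cast
        gcongr

lemma count1 (E X : ℕ) {y : ℝ} (hy : 1 ≤ y) (P : Finset ℕ)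
    (hP : ∀ n ∈ P, 0 < n ∧ n ≤ X ∧
      ∃ l, l.Prime ∧ l ≤ E ∧ y < ((l ^ n.factorization l : ℕ) : ℝ)) :
    (P.card : ℝ) ≤ E * (X / y) := by
  classical
  have hsub : P ⊆ ((Finset.Icc 1 E).filter Nat.Prime).biUnion (fun l => (Finset.Ioc 0 X).filter
      (fun n => y < ((l ^ n.factorization l : ℕ) : ℝ))) := by
    intro n hn
    obtain ⟨h1, h2, l, hl, hlE, hly⟩ := hP n hn
    rw [Finset.mem_biUnion]
    exact ⟨l, Finset.mem_filter.2 ⟨Finset.mem_Icc.2 ⟨hl.pos, hlE⟩, hl⟩,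
      Finset.mem_filter.2 ⟨Finset.mem_Ioc.2 ⟨h1, h2⟩, hly⟩⟩
  have h1 := (Finset.card_le_card hsub).trans Finset.card_biUnion_le
  have hX : 0 ≤ (X : ℝ) / y := by positivity
  calc (P.card : ℝ) ≤ ∑ l ∈ (Finset.Icc 1 E).filter Nat.Prime, (((Finset.Ioc 0 X).filter
      (fun n => y < ((l ^ n.factorization l : ℕ) : ℝ))).card : ℝ) := by exact_mod_cast h1
    _ ≤ ∑ l ∈ (Finset.Icc 1 E).filter Nat.Prime, (X / y : ℝ) :=
        Finset.sum_le_sum fun l hl => count1_aux l X (Finset.mem_filter.1 hl).2 hy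
    _ = ((Finset.Icc 1 E).filter Nat.Prime).card * (X / y : ℝ) := by simp
    _ ≤ E * (X / y) := by
        gcongr
        simpa using Finset.card_filter_le (Finset.Icc 1 E) Nat.Prime

lemma fact_inj {r : ℕ} (q : Fin r → ℕ) (hq : ∀ i, (q i).Prime) (hinj : Function.Injective q)
    (a b : Fin r → ℕ) (h : ∏ i, q i ^ a i = ∏ i, q i ^ b i) : a = b := by
  have key : ∀ c : Fin r → ℕ, ∀ j, (∏ i, q i ^ c i).factorization (q j) = c j := by
    intro c j
    rw [Nat.factorization_prod (fun i _ => pow_ne_zero _ (hq i).ne_zero), Finset.sum_apply']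
    rw [Finset.sum_eq_single j]
    · simp [(hq j).factorization_self]
    · intro i _ hij
      simp [(hq i).factorization, hinj.ne hij]
    · simp
  funext j
  rw [← key a j, ← key b j, h]

lemma card_primeFactors_le {n Q T : ℕ} (hn : n ≠ 0) (h : n ≤ Q ^ T) :
    n.primeFactors.card ≤ Q * T := by
  have h1 : 2 ^ n.primeFactors.card ≤ ∏ p ∈ n.primeFactors, p :=
    Finset.pow_card_le_prod _ _ _ fun p hp => (Nat.prime_of_mem_primeFactors hp).two_le
  have h2 : ∏ p ∈ n.primeFactors, p ≤ n :=
    Nat.le_of_dvd (Nat.pos_of_ne_zero hn) (Nat.prod_primeFactors_dvd n)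
  have h3 : Q ^ T ≤ 2 ^ (Q * T) := by
    rw [pow_mul]
    exact Nat.pow_le_pow_left Nat.lt_two_pow_self.le _
  exact (Nat.pow_le_pow_iff_right (by norm_num : 1 < 2)).1 (h1.trans (h2.trans (h.trans h3)))

lemma exists_coincidence {p r T : ℕ} [Fact p.Prime] (u : Fin r → (ZMod p)ˣ)
    (h : Finset.univ.lcm (fun i => orderOf (u i)) < (T+1)^r) :
    ∃ a b : Fin r → ℕ, a ≠ b ∧ (∀ i, a i ≤ T) ∧ (∀ i, b i ≤ T) ∧
      ∏ i, u i ^ a i = ∏ i, u i ^ b i := by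
  classical
  set m := Finset.univ.lcm (fun i => orderOf (u i)) with hm
  have hm0 : m ≠ 0 := by
    rw [hm]; intro h
    rw [Finset.lcm_eq_zero_iff] at h
    obtain ⟨i, _, hi⟩ := h
    exact (orderOf_pos (u i)).ne' hi
  have hgm : ∀ i, u i ^ m = 1 := fun i =>
    orderOf_dvd_iff_pow_eq_one.1 (hm ▸ Finset.dvd_lcm (Finset.mem_univ i))
  have hc := IsCyclic.card_pow_eq_one_le (α := (ZMod p)ˣ) (Nat.pos_of_ne_zero hm0)
  have hlt : ((Finset.univ.filter (fun a : (ZMod p)ˣ => a ^ m = 1))).card <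
      (Finset.univ : Finset (Fin r → Fin (T+1))).card := by
    refine lt_of_le_of_lt hc ?_
    simpa using h
  obtain ⟨a, _, b, _, hab, he⟩ := Finset.exists_ne_map_eq_of_card_lt_of_maps_to hlt
    (f := fun e => ∏ i, u i ^ (e i : ℕ)) (by
      intro e _
      simp only [Finset.coe_filter, Finset.mem_univ, true_and, Set.mem_ofPred_eq]
      rw [← Finset.prod_pow]
      apply Finset.prod_eq_one
      intro i _
      rw [← pow_mul, mul_comm, pow_mul, hgm, one_pow])
  refine ⟨fun i => a i, fun i => b i, ?_, fun i => Nat.lt_succ_iff.1 (a i).isLt,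
    fun i => Nat.lt_succ_iff.1 (b i).isLt, he⟩
  intro hE
  apply hab
  funext i
  exact Fin.ext (congrFun hE i)

/-- numerator of `∏ q_i^{f_i} - 1` -/
def numer {r : ℕ} (q : Fin r → ℕ) (f : Fin r → ℤ) : ℤ :=
  ((∏ i, q i ^ (f i).toNat : ℕ) : ℤ) - ((∏ i, q i ^ (-f i).toNat : ℕ) : ℤ)

lemma numer_ne {r : ℕ} (q : Fin r → ℕ) (hq : ∀ i, (q i).Prime) (hinj : Function.Injective q)
    (f : Fin r → ℤ) (hf : f ≠ 0) : numer q f ≠ 0 := by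
  intro h
  have h1 : (∏ i, q i ^ (f i).toNat : ℕ) = ∏ i, q i ^ (-f i).toNat := by
    unfold numer at h
    have := sub_eq_zero.1 h
    exact_mod_cast this
  have h2 := fact_inj q hq hinj _ _ h1
  apply hf
  funext i
  have := congrFun h2 i
  simp only [Pi.zero_apply] at this ⊢
  omega

lemma numer_le {r T : ℕ} (q : Fin r → ℕ) (hq : ∀ i, (q i).Prime)
    (f : Fin r → ℤ) (hf : ∀ i, -T ≤ f i ∧ f i ≤ T) :
    (numer q f).natAbs ≤ (∏ i, q i) ^ T := by
  have key : ∀ c : Fin r → ℕ, (∀ i, c i ≤ T) → ∏ i, q i ^ c i ≤ (∏ i, q i) ^ T := by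
    intro c hc
    rw [← Finset.prod_pow]
    exact Finset.prod_le_prod' fun i _ => Nat.pow_le_pow_right (hq i).pos (hc i)
  have h1 := key (fun i => (f i).toNat) (fun i => by have := hf i; omega)
  have h2 := key (fun i => (-f i).toNat) (fun i => by have := hf i; omega)
  unfold numer
  omega

lemma count2 {r T : ℕ} (q : Fin r → ℕ) (hq : ∀ i, (q i).Prime) (hinj : Function.Injective q)
    (P : Finset ℕ) (hP : ∀ p ∈ P, p.Prime ∧ (∀ i, q i < p) ∧
      Finset.univ.lcm (fun i => orderOf ((q i : ℕ) : ZMod p)) < (T+1)^r) :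
    P.card ≤ (2*T+1)^r * ((∏ i, q i) * T) := by
  classical
  set box := (Fintype.piFinset (fun _ : Fin r => Finset.Icc (-(T:ℤ)) T)) with hbox
  have hsub : P ⊆ (box.filter (fun f => f ≠ 0)).biUnion
      (fun f => (numer q f).natAbs.primeFactors) := by
    intro p hp
    obtain ⟨hpp, hqp, hlcm⟩ := hP p hp
    haveI : Fact p.Prime := ⟨hpp⟩
    have hne : ∀ i, ((q i : ℕ) : ZMod p) ≠ 0 := by
      intro i h
      rw [ZMod.natCast_eq_zero_iff] at h
      exact absurd (Nat.le_of_dvd (hq i).pos h) (not_le.2 (hqp i))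
    set u : Fin r → (ZMod p)ˣ := fun i => Units.mk0 _ (hne i) with hu
    have huo : ∀ i, orderOf (u i) = orderOf ((q i : ℕ) : ZMod p) := by
      intro i
      rw [← orderOf_units]; rfl
    obtain ⟨a, b, hab, haT, hbT, he⟩ := exists_coincidence (T := T) u (by simpa only [huo] using hlcm)
    rw [Finset.mem_biUnion]
    set f : Fin r → ℤ := fun i => (a i : ℤ) - b i with hf
    have hf0 : f ≠ 0 := by
      intro h
      apply hab
      funext i
      have := congrFun h i
      simp only [hf, Pi.zero_apply] at this
      omega
    refine ⟨f, ?_, ?_⟩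
    · rw [Finset.mem_filter, hbox, Fintype.mem_piFinset]
      refine ⟨fun i => ?_, hf0⟩
      rw [Finset.mem_Icc]
      have := haT i
      have := hbT i
      simp only [hf]
      omega
    · rw [Nat.mem_primeFactors]
      refine ⟨hpp, ?_, Int.natAbs_ne_zero.2 (numer_ne q hq hinj f hf0)⟩
      rw [← Int.natCast_dvd, ← ZMod.intCast_zmod_eq_zero_iff_dvd]
      have hz : ∏ i, u i ^ (f i).toNat = ∏ i, u i ^ (-f i).toNat := by
        apply mul_right_cancel (b := ∏ i, u i ^ (min (a i) (b i)))
        rw [← Finset.prod_mul_distrib, ← Finset.prod_mul_distrib]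
        convert he using 2 with i _ i _
        · rw [← pow_add]
          congr 1
          simp only [hf]; omega
        · rw [← pow_add]
          congr 1
          simp only [hf]; omega
      have hz' := congrArg (Units.val) hz
      simp only [Units.coe_prod, Units.val_pow_eq_pow_val, hu, Units.val_mk0] at hz'
      unfold numer
      push_cast
      exact sub_eq_zero.2 hz'
  refine (Finset.card_le_card hsub).trans ?_
  refine (Finset.card_biUnion_le_card_mul _ _ ((∏ i, q i) * T) ?_).trans ?_
  · intro f hf
    rw [Finset.mem_filter, hbox, Fintype.mem_piFinset] at hf
    apply card_primeFactors_le (Int.natAbs_ne_zero.2 (numer_ne q hq hinj f hf.2))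
    exact numer_le q hq f fun i => Finset.mem_Icc.1 (hf.1 i)
  · apply Nat.mul_le_mul_right
    refine (Finset.card_filter_le _ _).trans ?_
    rw [hbox, Fintype.card_piFinset]
    simp only [Int.card_Icc, Finset.prod_const, Finset.card_univ, Fintype.card_fin]
    apply Nat.pow_le_pow_left
    omega

lemma det_lemma {p r E : ℕ} [Fact p.Prime] (q : Fin r → ℕ) (hq : ∀ i, (q i).Prime)
    (hqp : ∀ i, q i < p) {x δ δ₁ : ℝ} (hx : 1 ≤ x) (hδ₁ : 0 ≤ δ₁)
    (hm : x ^ (1 - δ) < (Finset.univ.lcm (fun i => orderOf ((q i : ℕ) : ZMod p)) : ℕ))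
    (hs : ∀ l, l.Prime → l ≤ E → ((l ^ (p-1).factorization l : ℕ) : ℝ) ≤ x ^ δ₁) :
    ∃ n : ℕ, 1 ≤ n ∧ n ≤ (∏ i, q i) ^ E ∧ ¬ p ∣ n ∧
      x ^ ((1 - δ) * E / (E + 1) - δ₁ * E) ≤ orderOf (n : ZMod p) := by
  have hpp : p.Prime := Fact.out
  have hx0 : 0 < x := by linarith
  have hne : ∀ i, ((q i : ℕ) : ZMod p) ≠ 0 := by
    intro i h
    rw [ZMod.natCast_eq_zero_iff] at h
    exact absurd (Nat.le_of_dvd (hq i).pos h) (not_le.2 (hqp i))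
  set u : Fin r → (ZMod p)ˣ := fun i => Units.mk0 _ (hne i) with hu
  have huo : ∀ i, orderOf (u i) = orderOf ((q i : ℕ) : ZMod p) := by
    intro i
    rw [← orderOf_units]; rfl
  set m := Finset.univ.lcm (fun i => orderOf ((q i : ℕ) : ZMod p)) with hmdef
  obtain ⟨e, he⟩ := lemA u E m (by simp only [huo, hmdef])
  have hmp : m ∣ p - 1 := by
    apply Finset.lcm_dvd
    intro i _
    exact ZMod.orderOf_dvd_card_sub_one (hne i)
  have hp1 : p - 1 ≠ 0 := by have := hpp.two_le; omega
  have hm0 : 0 < m := Nat.pos_of_dvd_of_pos hmp (Nat.pos_of_ne_zero hp1)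
  have hS := smooth_le (E := E) hmp hp1 (Real.one_le_rpow hx hδ₁) hs
  set S := smoothPart E m with hSdef
  set n := ∏ i, q i ^ (e i : ℕ) with hn
  have hcast : ((∏ i, u i ^ (e i : ℕ) : (ZMod p)ˣ) : ZMod p) = (n : ZMod p) := by
    simp [hn, hu, Units.coe_prod]
  have ho : orderOf (∏ i, u i ^ (e i : ℕ)) = orderOf (n : ZMod p) := by
    rw [← orderOf_units, hcast]
  rw [ho] at he
  set o := orderOf (n : ZMod p) with hodef
  have hmE : m ^ E ≤ (o * S) ^ (E+1) := by
    apply Nat.le_of_mul_le_mul_right _ hm0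
    calc m ^ E * m = m ^ (E+1) := (pow_succ _ _).symm
      _ ≤ _ := he
      _ = _ := by rw [mul_pow]; ring
  refine ⟨n, Finset.prod_pos fun i _ => pow_pos (hq i).pos _, ?_, ?_, ?_⟩
  · rw [hn, ← Finset.prod_pow]
    exact Finset.prod_le_prod' fun i _ =>
      Nat.pow_le_pow_right (hq i).pos (Nat.lt_succ_iff.1 (e i).isLt)
  · rw [← ZMod.natCast_eq_zero_iff, ← hcast]
    exact Units.ne_zero _
  · have h1 : (x ^ (1 - δ)) ^ E ≤ ((o : ℝ) * (x ^ δ₁) ^ E) ^ (E+1) := by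
      calc (x ^ (1 - δ)) ^ E ≤ (m : ℝ) ^ E := by gcongr
        _ ≤ ((o : ℝ) * S) ^ (E+1) := by exact_mod_cast hmE
        _ ≤ _ := by gcongr
    rw [Real.rpow_sub hx0, div_le_iff₀ (by positivity)]
    have h2 : x ^ (δ₁ * E) = (x ^ δ₁) ^ E := by
      rw [Real.rpow_mul hx0.le, Real.rpow_natCast]
    rw [h2]
    refine le_of_pow_le_pow_left₀ (n := E+1) (by omega) (by positivity) ?_
    refine le_trans (le_of_eq ?_) h1
    rw [← Real.rpow_natCast, ← Real.rpow_mul hx0.le, ← Real.rpow_natCast, ← Real.rpow_mul hx0.le]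
    congr 1
    push_cast
    field_simp

lemma rpow_isLittleO {c : ℝ} (hc : 0 < c) :
    (fun x : ℝ => x ^ (1 - c)) =o[atTop] (fun x : ℝ => x / Real.log x) := by
  have h := (isBigO_refl (fun x : ℝ => x ^ (1 - c) / Real.log x) atTop).mul_isLittleO
    (isLittleO_log_rpow_atTop hc)
  refine h.congr' ?_ ?_
  · filter_upwards [eventually_gt_atTop 1] with x hx
    have := Real.log_pos hx
    field_simp
  · filter_upwards [eventually_gt_atTop 1] with x hx
    have : x ^ (1 - c) * x ^ c = x := by
      rw [← Real.rpow_add (by linarith)]; simp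
    rw [div_mul_eq_mul_div, this]

theorem stmt_4 (ξ : ℝ → ℝ) (hξ : Tendsto ξ atTop atTop) (ε : ℝ) (hε : 0 < ε) :
    (fun x : ℝ => (Nat.card {p : ℕ |
        Nat.Prime p ∧ (p : ℝ) ≤ x ∧
        ((((Finset.Icc 1 ⌊ξ (p : ℝ)⌋₊).filter (fun m => ¬ p ∣ m)).sup
            (fun m => orderOf ((m : ZMod p))) : ℕ) : ℝ) ≤ (p : ℝ) ^ (1 - ε)} : ℝ))
      =o[atTop] (fun x : ℝ => x / Real.log x) := by
  classical
  obtain ⟨η, hη0, hη1, hηε⟩ : ∃ η : ℝ, 0 < η ∧ η ≤ 1/2 ∧ η ≤ ε :=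
    ⟨min ε (1/2), by positivity, min_le_right _ _, min_le_left _ _⟩
  set δ := η / 4 with hδ
  have hδ0 : 0 < δ := by positivity
  obtain ⟨E, hE⟩ := exists_nat_ge (1 / δ)
  have hEpos : (0:ℝ) < E := lt_of_lt_of_le (by positivity) hE
  set δ₁ := δ / (E + 1) with hδ₁
  have hδ₁0 : 0 < δ₁ := by positivity
  -- number of primes used
  set r := E with hr
  set q : Fin r → ℕ := fun i => Nat.nth Nat.Prime i with hqdef
  have hq : ∀ i, (q i).Prime := fun i => Nat.prime_nth_prime i
  have hinj : Function.Injective q := by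
    intro i j hij
    exact Fin.ext (Nat.nth_injective Nat.infinite_setOf_prime hij)
  set Q := ∏ i, q i with hQ
  have hqQ : ∀ i, q i ≤ Q := fun i => Nat.le_of_dvd
    (Finset.prod_pos fun i _ => (hq i).pos) (Finset.dvd_prod_of_mem q (Finset.mem_univ i))
  obtain ⟨P₁, hP₁⟩ := eventually_atTop.1
    ((hξ.comp tendsto_natCast_atTop_atTop).eventually_ge_atTop ((Q ^ E : ℕ) : ℝ))
  set P₀ := max P₁ (Q+1) with hP₀
  have hmain : ∀ᶠ x : ℝ in atTop, ((Nat.card {p : ℕ |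
        Nat.Prime p ∧ (p : ℝ) ≤ x ∧
        ((((Finset.Icc 1 ⌊ξ (p : ℝ)⌋₊).filter (fun m => ¬ p ∣ m)).sup
            (fun m => orderOf ((m : ZMod p))) : ℕ) : ℝ) ≤ (p : ℝ) ^ (1 - ε)} : ℕ) : ℝ) ≤
        P₀ * x ^ (1 - 1 : ℝ) + E * x ^ (1 - δ₁) + (3^r * Q) * x ^ (1 - δ^2) := by
    filter_upwards [eventually_gt_atTop 1] with x hx
    have hx0 : 0 < x := by linarith
    set T := ⌊x ^ ((1 - δ) / r)⌋₊ with hT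
    set A := Finset.range P₀ with hA
    set U := (Finset.range (⌊x⌋₊+1)).filter Nat.Prime with hU
    set B₁ := U.filter (fun p => ∃ l, l.Prime ∧ l ≤ E ∧
      x ^ δ₁ < ((l ^ (p-1).factorization l : ℕ) : ℝ)) with hB₁
    set B₂ := U.filter (fun p => (∀ i, q i < p) ∧
      ((Finset.univ.lcm (fun i => orderOf ((q i : ℕ) : ZMod p)) : ℕ) : ℝ) ≤ x ^ (1 - δ)) with hB₂
    have hsub : {p : ℕ | Nat.Prime p ∧ (p : ℝ) ≤ x ∧
        ((((Finset.Icc 1 ⌊ξ (p : ℝ)⌋₊).filter (fun m => ¬ p ∣ m)).sup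
            (fun m => orderOf ((m : ZMod p))) : ℕ) : ℝ) ≤ (p : ℝ) ^ (1 - ε)} ⊆
        ((A ∪ B₁ ∪ B₂ : Finset ℕ) : Set ℕ) := by
      rintro p ⟨hpp, hpx, hsup⟩
      have : Fact p.Prime := ⟨hpp⟩
      by_contra hcon
      simp only [Finset.coe_union, Set.mem_union, Finset.mem_coe, not_or] at hcon
      obtain ⟨⟨hnA, hnB₁⟩, hnB₂⟩ := hcon
      have hpU : p ∈ U := by
        rw [hU, Finset.mem_filter, Finset.mem_range]
        exact ⟨Nat.lt_succ_of_le (Nat.le_floor hpx), hpp⟩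
      have hpP : P₀ ≤ p := by simpa [hA] using hnA
      have hqp : ∀ i, q i < p := fun i =>
        lt_of_lt_of_le (Nat.lt_succ_of_le (hqQ i)) ((le_max_right _ _).trans hpP)
      have h1 : ∀ l, l.Prime → l ≤ E → ((l ^ (p-1).factorization l : ℕ) : ℝ) ≤ x ^ δ₁ := by
        intro l hl hlE
        by_contra hlt
        exact hnB₁ (Finset.mem_filter.2 ⟨hpU, l, hl, hlE, not_le.1 hlt⟩)
      have h2 : x ^ (1 - δ) <
          (Finset.univ.lcm (fun i => orderOf ((q i : ℕ) : ZMod p)) : ℕ) := by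
        by_contra hlt
        exact hnB₂ (Finset.mem_filter.2 ⟨hpU, hqp, not_lt.1 hlt⟩)
      obtain ⟨n, hn1, hnQ, hpn, hord⟩ := det_lemma (E := E) q hq hqp hx.le hδ₁0.le h2 h1
      have hnξ : n ≤ ⌊ξ (p : ℝ)⌋₊ := by
        apply Nat.le_floor
        have h3 : ((Q ^ E : ℕ) : ℝ) ≤ ξ p := hP₁ p ((le_max_left _ _).trans hpP)
        exact le_trans (by exact_mod_cast hnQ) h3
      have h4 : orderOf (n : ZMod p) ≤ ((Finset.Icc 1 ⌊ξ (p : ℝ)⌋₊).filter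
          (fun m => ¬ p ∣ m)).sup (fun m => orderOf ((m : ZMod p))) :=
        Finset.le_sup (f := fun m : ℕ => orderOf ((m : ZMod p)))
          (Finset.mem_filter.2 ⟨Finset.mem_Icc.2 ⟨hn1, hnξ⟩, hpn⟩)
      have h5 : (orderOf (n : ZMod p) : ℝ) ≤ (p : ℝ) ^ (1 - ε) :=
        le_trans (by exact_mod_cast h4) hsup
      have hp1 : (1:ℝ) ≤ p := by exact_mod_cast hpp.one_lt.le
      have h6 : (p : ℝ) ^ (1 - ε) ≤ x ^ (1 - η) :=
        (Real.rpow_le_rpow_of_exponent_le hp1 (by linarith)).trans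
          (Real.rpow_le_rpow (by linarith) hpx (by linarith))
      have h7 : x ^ (1 - η) < x ^ ((1 - δ) * E / (E + 1) - δ₁ * E) := by
        apply Real.rpow_lt_rpow_of_exponent_lt hx
        have hB : 1 / ((E : ℝ) + 1) ≤ δ := by
          rw [div_le_iff₀ (by positivity)]
          rw [div_le_iff₀ hδ0] at hE
          nlinarith
        have h8 : (1 - δ) * E / (E + 1) - δ₁ * E = (1 - 2 * δ) * (1 - 1 / ((E : ℝ) + 1)) := by
          rw [hδ₁]; field_simp; ring
        rw [h8]
        nlinarith
      linarith
    have hcard : Nat.card {p : ℕ | Nat.Prime p ∧ (p : ℝ) ≤ x ∧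
        ((((Finset.Icc 1 ⌊ξ (p : ℝ)⌋₊).filter (fun m => ¬ p ∣ m)).sup
            (fun m => orderOf ((m : ZMod p))) : ℕ) : ℝ) ≤ (p : ℝ) ^ (1 - ε)} ≤
        A.card + B₁.card + B₂.card := by
      refine (Nat.card_mono (Finset.finite_toSet _) hsub).trans ?_
      rw [Nat.card_coe_set_eq, Set.ncard_coe_finset]
      exact (Finset.card_union_le _ _).trans (Nat.add_le_add_right (Finset.card_union_le _ _) _)
    have hAc : (A.card : ℝ) ≤ P₀ * x ^ (1 - 1 : ℝ) := by simp [hA]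
    have hB₁c : (B₁.card : ℝ) ≤ E * x ^ (1 - δ₁) := by
      have hinj1 : (B₁.image (fun p => p - 1)).card = B₁.card := by
        apply Finset.card_image_of_injOn
        intro a ha b hb hab
        have ha' : a.Prime := (Finset.mem_filter.1 (Finset.mem_filter.1 ha).1).2
        have hb' : b.Prime := (Finset.mem_filter.1 (Finset.mem_filter.1 hb).1).2
        have := ha'.pos
        have := hb'.pos
        simp only at hab
        omega
      have hc1 := count1 E ⌊x⌋₊ (Real.one_le_rpow hx.le hδ₁0.le)
        (B₁.image (fun p => p - 1)) (by
          intro n hn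
          obtain ⟨p, hp, rfl⟩ := Finset.mem_image.1 hn
          obtain ⟨hp1, hp2⟩ := Finset.mem_filter.1 hp
          obtain ⟨hp3, hp4⟩ := Finset.mem_filter.1 hp1
          have := hp4.two_le
          have := Finset.mem_range.1 hp3
          exact ⟨by omega, by omega, hp2⟩)
      rw [hinj1] at hc1
      refine hc1.trans ?_
      rw [Real.rpow_sub hx0, Real.rpow_one]
      gcongr
      exact Nat.floor_le hx0.le
    have hB₂c : (B₂.card : ℝ) ≤ (3^r * Q) * x ^ (1 - δ^2) := by
      have hrpos : (0:ℝ) < r := hEpos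
      have hexp : 0 ≤ (1 - δ) / r := div_nonneg (by linarith) hrpos.le
      have hy1 : 1 ≤ x ^ ((1 - δ) / r) := Real.one_le_rpow hx.le hexp
      have hTle : (T : ℝ) ≤ x ^ ((1 - δ) / r) := Nat.floor_le (by positivity)
      have hTlt : x ^ ((1 - δ) / r) < (T : ℝ) + 1 := Nat.lt_floor_add_one _
      have hyr : (x ^ ((1 - δ) / r)) ^ r = x ^ (1 - δ) := by
        rw [← Real.rpow_natCast, ← Real.rpow_mul hx0.le]
        congr 1
        field_simp
      have hr0 : r ≠ 0 := by
        intro h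
        rw [h] at hrpos
        simp at hrpos
      have hc2 := count2 (T := T) q hq hinj B₂ (by
        intro p hp
        obtain ⟨hp1, hp2, hp3⟩ := Finset.mem_filter.1 hp
        obtain ⟨_, hp4⟩ := Finset.mem_filter.1 hp1
        refine ⟨hp4, hp2, ?_⟩
        have : x ^ (1 - δ) < ((T : ℝ) + 1) ^ r := by
          rw [← hyr]
          exact pow_lt_pow_left₀ hTlt (by positivity) hr0
        exact_mod_cast lt_of_le_of_lt hp3 this)
      calc (B₂.card : ℝ) ≤ (2 * (T:ℝ) + 1) ^ r * (Q * T) := by exact_mod_cast hc2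
        _ ≤ (3 * x ^ ((1 - δ) / r)) ^ r * (Q * x ^ ((1 - δ) / r)) := by
            gcongr
            linarith
        _ = (3^r * Q) * (x ^ (1 - δ) * x ^ ((1 - δ) / r)) := by
            rw [mul_pow, hyr]; ring
        _ ≤ (3^r * Q) * x ^ (1 - δ^2) := by
            rw [← Real.rpow_add hx0]
            gcongr
            · exact hx.le
            · have : (1 - δ) / r ≤ (1 - δ) * δ := by
                rw [div_eq_mul_one_div]
                apply mul_le_mul_of_nonneg_left _ (by linarith)
                rw [div_le_iff₀ hrpos]
                rw [div_le_iff₀ hδ0] at hE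
                linarith
              nlinarith
    have : ((Nat.card {p : ℕ | Nat.Prime p ∧ (p : ℝ) ≤ x ∧
        ((((Finset.Icc 1 ⌊ξ (p : ℝ)⌋₊).filter (fun m => ¬ p ∣ m)).sup
            (fun m => orderOf ((m : ZMod p))) : ℕ) : ℝ) ≤ (p : ℝ) ^ (1 - ε)} : ℕ) : ℝ) ≤
        A.card + B₁.card + B₂.card := by exact_mod_cast hcard
    linarith
  have hlo : (fun x : ℝ => P₀ * x ^ (1 - 1 : ℝ) + E * x ^ (1 - δ₁) + (3^r * Q) * x ^ (1 - δ^2))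
      =o[atTop] (fun x : ℝ => x / Real.log x) :=
    (((rpow_isLittleO one_pos).const_mul_left _).add
      ((rpow_isLittleO hδ₁0).const_mul_left _)).add
      ((rpow_isLittleO (by positivity)).const_mul_left _)
  refine IsBigO.trans_isLittleO (IsBigO.of_bound 1 ?_) hlo
  filter_upwards [hmain] with x hx
  rw [one_mul, Real.norm_of_nonneg (Nat.cast_nonneg _)]
  exact hx.trans (le_abs_self _)
end

section
/- Let A = (2·3·5·7·11)^9. Then, as x → ∞, for all but o(x/log x) primes p ≤ x there exist positive integers m and n such that p divides the product ∏_{a | A, a > 1} (a^m + a^n + 1). -/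
open Filter Asymptotics

/-- Incidence bound: a large multiplicative subgroup solves `u + v + 1 = 0`. -/
theorem inc_aux (p : ℕ) [Fact p.Prime] (H : Subgroup (ZMod p)ˣ)
    (hT : p ^ 3 < (Nat.card H) ^ 4) :
    ∃ u ∈ H, ∃ v ∈ H, (u : ZMod p) + (v : ZMod p) + 1 = 0 := by
  classical
  by_contra hno
  push Not at hno
  set S : Finset (ZMod p) := Finset.univ.filter (fun z => ∃ u ∈ H, (u : ZMod p) = z) with hS
  have hScard : S.card = Nat.card H := by
    have : S = Finset.univ.image (fun u : H => ((u : (ZMod p)ˣ) : ZMod p)) := by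
      ext z; simp [hS]
    rw [this, Finset.card_image_of_injective, Finset.card_univ, Nat.card_eq_fintype_card]
    intro a b hab
    exact Subtype.ext (Units.ext hab)
  have hmem : ∀ z ∈ S, ∃ u ∈ H, (u : ZMod p) = z := by
    intro z hz; simpa [hS] using hz
  have hzero : ∀ m ∈ S, ∀ b ∈ S, ∀ x ∈ S, ∀ y ∈ S, y + m * x + b ≠ 0 := by
    intro m hm b hb x hx y hy h0
    obtain ⟨m, hm', rfl⟩ := hmem m hm
    obtain ⟨b, hb', rfl⟩ := hmem b hb
    obtain ⟨x, hx', rfl⟩ := hmem x hx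
    obtain ⟨y, hy', rfl⟩ := hmem y hy
    refine hno (y * b⁻¹) (H.mul_mem hy' (H.inv_mem hb')) (m * x * b⁻¹)
      (H.mul_mem (H.mul_mem hm' hx') (H.inv_mem hb')) ?_
    have hb0 : (b : ZMod p) * ((b⁻¹ : (ZMod p)ˣ) : ZMod p) = 1 := Units.mul_inv b
    simp only [Units.val_mul]
    linear_combination ((b⁻¹ : (ZMod p)ˣ) : ZMod p) * h0 - hb0
  set T := Nat.card H with hTdef
  let P : Finset (ZMod p × ZMod p) := S ×ˢ S
  have hP : P.card = T ^ 2 := by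
    simp only [P, Finset.card_product, hScard]; ring
  let f : ZMod p × ZMod p → ZMod p × ZMod p → ℝ :=
    fun l z => if z.2 + l.1 * z.1 + l.2 = 0 then 1 else 0
  let I : ZMod p × ZMod p → ℝ := fun l => ∑ z ∈ P, f l z
  have hf1 : ∀ z, ∑ l, f l z = p := by
    intro z
    simp only [f]
    rw [Fintype.sum_prod_type]
    have : ∀ m : ZMod p, ∑ b : ZMod p, (if z.2 + m * z.1 + b = 0 then (1:ℝ) else 0) = 1 := by
      intro m
      rw [Finset.sum_eq_single (-(z.2 + m * z.1))]
      · simp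
      · intro b _ hb
        rw [if_neg]
        intro h
        exact hb (by linear_combination h)
      · simp
    simp only [this]
    simp [ZMod.card]
  have hf2 : ∀ z w, z ≠ w → ∑ l, f l z * f l w ≤ 1 := by
    intro z w hzw
    have : ∑ l, f l z * f l w = (((Finset.univ.filter (fun l : ZMod p × ZMod p =>
        z.2 + l.1 * z.1 + l.2 = 0 ∧ w.2 + l.1 * w.1 + l.2 = 0)).card : ℕ) : ℝ) := by
      rw [Finset.card_filter]
      push_cast
      refine Finset.sum_congr rfl fun l _ => ?_
      simp only [f]
      by_cases h1 : z.2 + l.1 * z.1 + l.2 = 0 <;> by_cases h2 : w.2 + l.1 * w.1 + l.2 = 0 <;>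
        simp [h1, h2]
    rw [this]
    have hc : (Finset.univ.filter (fun l : ZMod p × ZMod p =>
        z.2 + l.1 * z.1 + l.2 = 0 ∧ w.2 + l.1 * w.1 + l.2 = 0)).card ≤ 1 := by
      rw [Finset.card_le_one]
      intro a ha b hb
      simp only [Finset.mem_filter, Finset.mem_univ, true_and] at ha hb
      have hx : z.1 ≠ w.1 := by
        intro hx
        apply hzw
        refine Prod.ext hx ?_
        linear_combination ha.1 - ha.2 - a.1 * hx
      have h1 : (a.1 - b.1) * (z.1 - w.1) = 0 := by
        linear_combination ha.1 - ha.2 - hb.1 + hb.2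
      have h2 : a.1 = b.1 := by
        rcases mul_eq_zero.mp h1 with h | h
        · exact sub_eq_zero.mp h
        · exact absurd (sub_eq_zero.mp h) hx
      refine Prod.ext h2 ?_
      linear_combination ha.1 - hb.1 - z.1 * h2
    exact_mod_cast hc
  have hff : ∀ z, ∑ l, f l z * f l z = p := by
    intro z
    rw [← hf1 z]
    refine Finset.sum_congr rfl fun l _ => ?_
    simp only [f]; split_ifs <;> simp
  have hsumI : ∑ l, I l = p * (T:ℝ) ^ 2 := by
    simp only [I]
    rw [Finset.sum_comm]
    simp only [hf1, Finset.sum_const, hP, nsmul_eq_mul]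
    push_cast; ring
  have hsumI2 : ∑ l, I l ^ 2 ≤ p * (T:ℝ) ^ 2 + ((T:ℝ) ^ 2) ^ 2 := by
    have e1 : ∑ l, I l ^ 2 = ∑ z ∈ P, ∑ w ∈ P, ∑ l, f l z * f l w := by
      simp only [I, sq, Finset.sum_mul_sum]
      rw [Finset.sum_comm]
      refine Finset.sum_congr rfl fun z _ => ?_
      rw [Finset.sum_comm]
    rw [e1]
    have e2 : ∀ z ∈ P, ∑ w ∈ P, ∑ l, f l z * f l w ≤ p + (T:ℝ)^2 := by
      intro z hz
      calc ∑ w ∈ P, ∑ l, f l z * f l w ≤ ∑ w ∈ P, ((if w = z then (p:ℝ) else 0) + 1) := by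
            refine Finset.sum_le_sum fun w _ => ?_
            split_ifs with h
            · subst h; rw [hff]; linarith
            · have := hf2 z w (Ne.symm h); linarith
        _ = p + (T:ℝ)^2 := by
            rw [Finset.sum_add_distrib, Finset.sum_ite_eq' P z, if_pos hz]
            simp [hP]
    calc _ ≤ ∑ z ∈ P, ((p:ℝ) + (T:ℝ)^2) := Finset.sum_le_sum e2
      _ = _ := by simp only [Finset.sum_const, hP, nsmul_eq_mul]; push_cast; ring
  have hp0 : (0:ℝ) < p := by exact_mod_cast (Fact.out : p.Prime).pos
  have hT0 : 0 < T := Nat.card_pos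
  have hTr : (0:ℝ) < T := by exact_mod_cast hT0
  have hvar : ∑ l, (I l - (T:ℝ)^2 / p) ^ 2 ≤ p * (T:ℝ)^2 := by
    have : ∑ l, (I l - (T:ℝ)^2 / p) ^ 2
        = ∑ l, I l ^ 2 - 2 * ((T:ℝ)^2 / p) * ∑ l, I l + p ^ 2 * ((T:ℝ)^2/p)^2 := by
      have : ∀ l, (I l - (T:ℝ)^2 / p) ^ 2 = I l ^ 2 - 2 * ((T:ℝ)^2 / p) * I l + ((T:ℝ)^2/p)^2 := by
        intro l; ring
      simp only [this, Finset.sum_add_distrib, Finset.sum_sub_distrib, ← Finset.mul_sum]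
      rw [Finset.sum_const, Finset.card_univ, Fintype.card_prod, ZMod.card, nsmul_eq_mul]
      push_cast; ring
    rw [this, hsumI]
    have e3 : 2 * ((T:ℝ)^2 / p) * (p * (T:ℝ)^2) = 2 * ((T:ℝ)^2)^2 := by field_simp
    have e4 : (p:ℝ)^2 * ((T:ℝ)^2/p)^2 = ((T:ℝ)^2)^2 := by field_simp
    rw [e3, e4]; linarith
  have hlow : (T:ℝ)^2 * ((T:ℝ)^2 / p)^2 ≤ ∑ l, (I l - (T:ℝ)^2 / p) ^ 2 := by
    calc (T:ℝ)^2 * ((T:ℝ)^2 / p)^2 = ∑ l ∈ P, ((T:ℝ)^2 / p)^2 := by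
          simp only [Finset.sum_const, hP, nsmul_eq_mul]; push_cast; ring
      _ = ∑ l ∈ P, (I l - (T:ℝ)^2 / p) ^ 2 := by
          refine Finset.sum_congr rfl fun l hl => ?_
          have : I l = 0 := by
            refine Finset.sum_eq_zero fun z hz => ?_
            simp only [f]
            rw [if_neg]
            simp only [P, Finset.mem_product] at hl hz
            exact hzero _ hl.1 _ hl.2 _ hz.1 _ hz.2
          rw [this]; ring
      _ ≤ _ := Finset.sum_le_sum_of_subset_of_nonneg (Finset.subset_univ _)
          (fun _ _ _ => sq_nonneg _)
  have hfin : (T:ℝ)^4 ≤ (p:ℝ)^3 := by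
    have h := hlow.trans hvar
    have h' : ((T:ℝ)^2 / p)^2 ≤ p := by
      have : (T:ℝ)^2 * ((T:ℝ)^2 / p)^2 ≤ (T:ℝ)^2 * p := by linarith
      exact le_of_mul_le_mul_left this (by positivity)
    rw [div_pow, div_le_iff₀ (by positivity)] at h'
    nlinarith
  have : T ^ 4 ≤ p ^ 3 := by exact_mod_cast hfin
  omega

open Classical in
theorem cnt_aux {G : Type*} [CommGroup G] [Finite G] [IsCyclic G] (g : Fin 5 → G)
    (hg : Subgroup.closure (Set.range g) = ⊤) (q k : ℕ) (hq : q.Prime) (hk : 0 < k)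
    (hd : q ^ k ∣ Nat.card G) (h10 : 10 ≤ q ^ k) :
    (Finset.univ.filter (fun e : Fin 5 → Fin 10 =>
      (∏ i, g i ^ (e i : ℕ)) ^ (Nat.card G / q ^ k) = 1)).card ≤ 10 ^ 4 := by
  classical
  set N := Nat.card G with hN
  have hNpos : 0 < N := Nat.card_pos
  set M := N / q ^ k with hM
  have hMN : M * q ^ k = N := Nat.div_mul_cancel hd
  obtain ⟨k', rfl⟩ : ∃ k', k = k' + 1 := ⟨k - 1, by omega⟩
  have hex : ∃ i, orderOf (g i ^ M) = q ^ (k' + 1) := by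
    by_contra hcon
    push Not at hcon
    have h1 : ∀ i, g i ^ (M * q ^ k') = 1 := by
      intro i
      have hdvd : orderOf (g i ^ M) ∣ q ^ (k' + 1) := by
        apply orderOf_dvd_of_pow_eq_one
        rw [← pow_mul, hMN]
        exact pow_card_eq_one'
      obtain ⟨j, hj, hjj⟩ := (Nat.dvd_prime_pow hq).mp hdvd
      have hj' : j ≤ k' := by
        rcases Nat.lt_or_ge k' j with h | h
        · exfalso
          have : j = k' + 1 := by omega
          exact hcon i (by rw [hjj, this])
        · exact h
      rw [pow_mul]
      apply orderOf_dvd_iff_pow_eq_one.mp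
      rw [hjj]
      exact pow_dvd_pow q hj'
    have h2 : ∀ x : G, x ^ (M * q ^ k') = 1 := by
      intro x
      have hle : Subgroup.closure (Set.range g) ≤ (powMonoidHom (M * q ^ k') : G →* G).ker := by
        rw [Subgroup.closure_le]
        rintro _ ⟨i, rfl⟩
        simp [MonoidHom.mem_ker, h1]
      have hx : x ∈ Subgroup.closure (Set.range g) := by rw [hg]; trivial
      have := hle hx
      simpa [MonoidHom.mem_ker] using this
    obtain ⟨x, hx⟩ := IsCyclic.exists_generator (α := G)
    have hox : orderOf x = N := orderOf_eq_card_of_forall_mem_zpowers hx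
    have hdv : N ∣ M * q ^ k' := by
      rw [← hox]; exact orderOf_dvd_of_pow_eq_one (h2 x)
    have hMpos : 0 < M := Nat.pos_of_ne_zero (by rintro h; rw [h] at hMN; omega)
    have hle := Nat.le_of_dvd (Nat.mul_pos hMpos (pow_pos hq.pos _)) hdv
    rw [← hMN] at hle
    have := Nat.le_of_mul_le_mul_left hle hMpos
    have h3 : q ^ k' < q ^ (k' + 1) := Nat.pow_lt_pow_right hq.one_lt (by omega)
    omega
  obtain ⟨i, hi⟩ := hex
  have hcard : (Finset.univ : Finset (Fin 4 → Fin 10)).card = 10 ^ 4 := by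
    simp
  rw [← hcard]
  refine Finset.card_le_card_of_injOn (fun e => i.removeNth e) (fun _ _ => Finset.mem_coe.2 (Finset.mem_univ _)) ?_
  intro e he e' he' hee
  simp only [Finset.coe_filter, Finset.mem_univ, true_and, Set.mem_ofPred_eq] at he he'
  have hrest : ∀ j, e (i.succAbove j) = e' (i.succAbove j) := fun j => congrFun hee j
  rw [Fin.prod_univ_succAbove _ i] at he he'
  simp only [hrest] at he
  have hpow : (g i ^ M) ^ (e i : ℕ) = (g i ^ M) ^ (e' i : ℕ) := by
    rw [mul_pow] at he he'
    have := mul_right_cancel (he.trans he'.symm)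
    rw [← pow_mul, ← pow_mul, mul_comm, pow_mul, this, ← pow_mul, mul_comm, pow_mul]
  have hei : e i = e' i := by
    apply Fin.ext
    apply pow_injOn_Iio_orderOf _ _ hpow
    · rw [hi]; exact lt_of_lt_of_le (e i).2 h10
    · rw [hi]; exact lt_of_lt_of_le (e' i).2 h10
  funext j
  rcases Fin.eq_self_or_eq_succAbove i j with h | ⟨j', h⟩
  · rw [h, hei]
  · rw [h, hrest]

open ArithmeticFunction in
theorem ord_aux {G : Type*} [CommGroup G] [Finite G] [IsCyclic G] (g : Fin 5 → G)
    (hg : Subgroup.closure (Set.range g) = ⊤) :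
    ∃ e : Fin 5 → Fin 10, e ≠ 0 ∧
      90000 * Real.log (Nat.card G) - 99999 * (∑ d ∈ Finset.range 10, vonMangoldt d) ≤
        99999 * Real.log (orderOf (∏ i, g i ^ (e i : ℕ))) := by
  classical
  set N := Nat.card G with hN
  have hNpos : 0 < N := Nat.card_pos
  set a : (Fin 5 → Fin 10) → G := fun e => ∏ i, g i ^ (e i : ℕ) with ha
  set C := ∑ d ∈ Finset.range 10, vonMangoldt d with hC
  have hod : ∀ e, orderOf (a e) ∣ N := fun e => orderOf_dvd_natCard _
  have hop : ∀ e, 0 < orderOf (a e) := fun e => orderOf_pos _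
  set E : Finset (Fin 5 → Fin 10) := Finset.univ.erase 0 with hE
  have hEcard : E.card = 99999 := by
    rw [hE, Finset.card_erase_of_mem (Finset.mem_univ _)]; simp
  have hidx : ∀ e d, d ∣ N → (d ∣ N / orderOf (a e) → (a e) ^ (N / d) = 1) := by
    intro e d hd h
    apply orderOf_dvd_iff_pow_eq_one.mp
    obtain ⟨c, hc⟩ := h
    have h1 : N = orderOf (a e) * (d * c) := by
      rw [← hc, Nat.mul_div_cancel' (hod e)]
    have hd0 : 0 < d := Nat.pos_of_dvd_of_pos hd hNpos
    have : N / d = orderOf (a e) * c := by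
      apply Nat.div_eq_of_eq_mul_right hd0
      rw [h1]; ring
    rw [this]; exact dvd_mul_right _ _
  have hlog : ∀ e, Real.log ((N / orderOf (a e) : ℕ) : ℝ) ≤
      ∑ d ∈ N.divisors, if (a e) ^ (N / d) = 1 then vonMangoldt d else 0 := by
    intro e
    rw [← vonMangoldt_sum, ← Finset.sum_filter]
    refine Finset.sum_le_sum_of_subset_of_nonneg ?_ (fun _ _ _ => vonMangoldt_nonneg)
    intro d hd
    have hd1 := Nat.dvd_of_mem_divisors hd
    have hd2 : d ∣ N := hd1.trans (Nat.div_dvd_of_dvd (hod e))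
    simp only [Finset.mem_filter, Nat.mem_divisors]
    exact ⟨⟨hd2, hNpos.ne'⟩, hidx e d hd2 hd1⟩
  have hcount : ∀ d ∈ N.divisors, ∑ e ∈ E, (if (a e) ^ (N / d) = 1 then vonMangoldt d else 0)
      ≤ 9999 * vonMangoldt d + (if d < 10 then 99999 * vonMangoldt d else 0) := by
    intro d hd
    have hdN := Nat.dvd_of_mem_divisors hd
    have hnn : 0 ≤ vonMangoldt d := vonMangoldt_nonneg
    rw [← Finset.sum_filter, Finset.sum_const, nsmul_eq_mul]
    split_ifs with h10
    · have h1 : (E.filter (fun e => (a e) ^ (N / d) = 1)).card ≤ 99999 := by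
        rw [← hEcard]; exact Finset.card_filter_le _ _
      have h2 : ((E.filter (fun e => (a e) ^ (N / d) = 1)).card : ℝ) ≤ 99999 := by
        exact (Nat.cast_le.mpr h1).trans (by norm_num)
      have h5 := mul_le_mul_of_nonneg_right h2 hnn
      linarith
    · by_cases hpp : IsPrimePow d
      · obtain ⟨q, k, hq, hk, rfl⟩ := (isPrimePow_nat_iff d).mp hpp
        have h1 := cnt_aux g hg q k hq hk hdN (by omega)
        have h2 : E.filter (fun e => (a e) ^ (N / q ^ k) = 1) =
            (Finset.univ.filter (fun e => (a e) ^ (N / q ^ k) = 1)).erase 0 := by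
          rw [hE, Finset.filter_erase]
        have h3 : (E.filter (fun e => (a e) ^ (N / q ^ k) = 1)).card ≤ 9999 := by
          rw [h2, Finset.card_erase_of_mem]
          · have : (Finset.univ.filter (fun e => (a e) ^ (N / q ^ k) = 1)).card ≤ 10 ^ 4 := h1
            omega
          · simp [ha]
        have h4 : ((E.filter (fun e => (a e) ^ (N / q ^ k) = 1)).card : ℝ) ≤ 9999 := by
          exact (Nat.cast_le.mpr h3).trans (by norm_num)
        have h5 := mul_le_mul_of_nonneg_right h4 hnn
        linarith
      · rw [vonMangoldt_eq_zero_iff.mpr hpp]; simp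
  have htotal : ∑ e ∈ E, Real.log ((N / orderOf (a e) : ℕ) : ℝ) ≤
      9999 * Real.log N + 99999 * C := by
    calc _ ≤ ∑ e ∈ E, ∑ d ∈ N.divisors, (if (a e) ^ (N / d) = 1 then vonMangoldt d else 0) :=
          Finset.sum_le_sum fun e _ => hlog e
      _ = ∑ d ∈ N.divisors, ∑ e ∈ E, (if (a e) ^ (N / d) = 1 then vonMangoldt d else 0) :=
          Finset.sum_comm
      _ ≤ ∑ d ∈ N.divisors, (9999 * vonMangoldt d + (if d < 10 then 99999 * vonMangoldt d else 0)) :=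
          Finset.sum_le_sum hcount
      _ ≤ _ := by
          rw [Finset.sum_add_distrib, ← Finset.mul_sum, vonMangoldt_sum, ← Finset.sum_filter,
            ← Finset.mul_sum]
          have : ∑ d ∈ N.divisors with d < 10, vonMangoldt d ≤ C := by
            refine Finset.sum_le_sum_of_subset_of_nonneg ?_ (fun _ _ _ => vonMangoldt_nonneg)
            intro d hd
            simp only [Finset.mem_filter] at hd
            exact Finset.mem_range.mpr hd.2
          linarith
  by_contra hcon
  push Not at hcon
  have hlt : ∑ e ∈ E, (9999 * Real.log N + 99999 * C) <
      ∑ e ∈ E, 99999 * Real.log ((N / orderOf (a e) : ℕ) : ℝ) := by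
    refine Finset.sum_lt_sum_of_nonempty (Finset.card_pos.mp (by rw [hEcard]; norm_num)) ?_
    intro e he
    have h1 := hcon e (Finset.ne_of_mem_erase he)
    have h2 : Real.log ((N / orderOf (a e) : ℕ) : ℝ) = Real.log N - Real.log (orderOf (a e)) := by
      rw [Nat.cast_div (hod e) (by exact_mod_cast (hop e).ne'), Real.log_div]
      · exact_mod_cast hNpos.ne'
      · exact_mod_cast (hop e).ne'
    rw [h2]
    linarith
  rw [Finset.sum_const, hEcard, ← Finset.mul_sum, nsmul_eq_mul] at hlt
  push_cast at hlt
  linarith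

/-- The five primes. -/
def fiveP : Fin 5 → ℕ := ![2, 3, 5, 7, 11]

theorem fiveP_prime (i : Fin 5) : (fiveP i).Prime := by
  fin_cases i <;> simp [fiveP] <;> norm_num

theorem fiveP_le (i : Fin 5) : fiveP i ≤ 11 := by
  fin_cases i <;> simp [fiveP]

theorem fiveP_inj : Function.Injective fiveP := by
  decide

theorem fact_aux (a : Fin 5 → ℕ) (j : Fin 5) :
    (∏ i, fiveP i ^ a i).factorization (fiveP j) = a j := by
  rw [Nat.factorization_prod (fun i _ => pow_ne_zero _ (fiveP_prime i).ne_zero)]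
  rw [Finsupp.finsetSum_apply, Finset.sum_eq_single j]
  · rw [(fiveP_prime j).factorization_pow]; simp
  · intro i _ hij
    rw [(fiveP_prime i).factorization_pow, Finsupp.single_apply, if_neg]
    exact fun h => hij (fiveP_inj h)
  · simp

/-- Numerator of `∏ P_i ^ v_i - 1`. -/
def Dv (v : Fin 5 → ℤ) : ℕ :=
  ((((∏ i, fiveP i ^ (v i).toNat : ℕ) : ℤ)) - ((∏ i, fiveP i ^ (-v i).toNat : ℕ) : ℤ)).natAbs

theorem Dv_ne_zero (v : Fin 5 → ℤ) (hv : v ≠ 0) : Dv v ≠ 0 := by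
  intro h
  apply hv
  rw [Dv, Int.natAbs_eq_zero, sub_eq_zero] at h
  have h' : (∏ i, fiveP i ^ (v i).toNat : ℕ) = ∏ i, fiveP i ^ (-v i).toNat := by exact_mod_cast h
  funext j
  have h1 := fact_aux (fun i => (v i).toNat) j
  have h2 := fact_aux (fun i => (-v i).toNat) j
  rw [h', h2] at h1
  simp only [Pi.zero_apply]
  omega

theorem prod_bound (E : ℕ) (a : Fin 5 → ℕ) (ha : ∀ i, a i ≤ E) :
    ∏ i, fiveP i ^ a i ≤ 2 ^ (12 * E) := by
  calc ∏ i, fiveP i ^ a i ≤ ∏ i, fiveP i ^ E :=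
        Finset.prod_le_prod' fun i _ => Nat.pow_le_pow_right (fiveP_prime i).pos (ha i)
    _ = (∏ i, fiveP i) ^ E := by rw [Finset.prod_pow]
    _ ≤ (2 ^ 12) ^ E := by
        apply Nat.pow_le_pow_left
        simp [fiveP, Fin.prod_univ_succ]
    _ = _ := by rw [← pow_mul]

theorem Dv_card (E : ℕ) (v : Fin 5 → ℤ) (hv : v ≠ 0) (hE : ∀ i, v i ∈ Finset.Icc (-(E:ℤ)) E) :
    (Dv v).primeFactors.card ≤ 12 * E := by
  have h1 : Dv v ≤ 2 ^ (12 * E) := by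
    have a1 := prod_bound E (fun i => (v i).toNat) (fun i => by
      have := Finset.mem_Icc.mp (hE i); omega)
    have a2 := prod_bound E (fun i => (-v i).toNat) (fun i => by
      have := Finset.mem_Icc.mp (hE i); omega)
    rw [Dv]
    omega
  have h2 : 2 ^ (Dv v).primeFactors.card ≤ ∏ q ∈ (Dv v).primeFactors, q :=
    Finset.pow_card_le_prod _ _ _ fun q hq => (Nat.prime_of_mem_primeFactors hq).two_le
  have h3 : ∏ q ∈ (Dv v).primeFactors, q ≤ Dv v :=
    Nat.le_of_dvd (Nat.pos_of_ne_zero (Dv_ne_zero v hv)) (Nat.prod_primeFactors_dvd _)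
  exact (Nat.pow_le_pow_iff_right (by norm_num)).mp (h2.trans (h3.trans h1))

/-- Exceptional primes. -/
noncomputable def BadE (E : ℕ) : Finset ℕ :=
  ((Fintype.piFinset (fun _ : Fin 5 => Finset.Icc (-(E:ℤ)) E)).filter (fun v => v ≠ 0)).biUnion
    (fun v => (Dv v).primeFactors)

theorem BadE_card (E : ℕ) : (BadE E).card ≤ (2 * E + 1) ^ 5 * (12 * E) := by
  refine (Finset.card_biUnion_le_card_mul _ _ (12 * E) ?_).trans ?_
  · intro v hv
    rw [Finset.mem_filter, Fintype.mem_piFinset] at hv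
    exact Dv_card E v hv.2 hv.1
  · apply Nat.mul_le_mul_right
    refine (Finset.card_filter_le _ _).trans ?_
    rw [Fintype.card_piFinset]
    simp only [Int.card_Icc, Finset.prod_const, Finset.card_univ, Fintype.card_fin]
    apply Nat.pow_le_pow_left
    omega

theorem mem_BadE (p : ℕ) [hp : Fact p.Prime] (E : ℕ) (g : Fin 5 → (ZMod p)ˣ)
    (hg : ∀ i, (g i : ZMod p) = (fiveP i : ZMod p))
    (hcard : Nat.card (Subgroup.closure (Set.range g)) < (E + 1) ^ 5) : p ∈ BadE E := by
  classical
  let K := Subgroup.closure (Set.range g)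
  have hgK : ∀ i, g i ∈ K := fun i => Subgroup.subset_closure ⟨i, rfl⟩
  let φ : (Fin 5 → Fin (E + 1)) → K := fun e =>
    ⟨∏ i, g i ^ (e i : ℕ), K.prod_mem fun i _ => K.pow_mem (hgK i) _⟩
  obtain ⟨e, e', hne, heq⟩ := Fintype.exists_ne_map_eq_of_card_lt φ (by
    rw [← Nat.card_eq_fintype_card]; simpa using hcard)
  have heq' : ∏ i, g i ^ (e i : ℕ) = ∏ i, g i ^ (e' i : ℕ) := congrArg Subtype.val heq
  let v : Fin 5 → ℤ := fun i => (e i : ℤ) - (e' i : ℤ)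
  have hv : v ≠ 0 := by
    intro h
    apply hne
    funext i
    have := congrFun h i
    simp only [v, Pi.zero_apply] at this
    apply Fin.ext
    omega
  have h1 : ∏ i, g i ^ (v i).toNat = ∏ i, g i ^ (-v i).toNat := by
    apply mul_right_cancel (b := ∏ i, g i ^ (min (e i : ℕ) (e' i : ℕ)))
    rw [← Finset.prod_mul_distrib, ← Finset.prod_mul_distrib]
    simp only [← pow_add]
    have a1 : ∀ i, (v i).toNat + min (e i : ℕ) (e' i : ℕ) = e i := by
      intro i; simp only [v]; omega
    have a2 : ∀ i, (-v i).toNat + min (e i : ℕ) (e' i : ℕ) = e' i := by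
      intro i; simp only [v]; omega
    simp only [a1, a2, heq']
  have h2 : ((∏ i, fiveP i ^ (v i).toNat : ℕ) : ZMod p) = ((∏ i, fiveP i ^ (-v i).toNat : ℕ) : ZMod p) := by
    have := congrArg (Units.val) h1
    rw [Units.coe_prod, Units.coe_prod] at this
    simp only [Units.val_pow_eq_pow_val, hg] at this
    push_cast
    exact this
  have h3 : p ∣ Dv v := by
    rw [Dv, ← Int.natCast_dvd, ← ZMod.intCast_zmod_eq_zero_iff_dvd]
    rw [Int.cast_sub, Int.cast_natCast, Int.cast_natCast, h2, sub_self]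
  rw [BadE, Finset.mem_biUnion]
  refine ⟨v, ?_, ?_⟩
  · rw [Finset.mem_filter, Fintype.mem_piFinset]
    refine ⟨fun i => ?_, hv⟩
    rw [Finset.mem_Icc]
    have := (e i).2
    have := (e' i).2
    simp only [v]
    omega
  · exact Nat.mem_primeFactors.mpr ⟨hp.out, h3, Dv_ne_zero v hv⟩

/-- The constant in the order bound. -/
noncomputable def Cvm : ℝ := ∑ d ∈ Finset.range 10, ArithmeticFunction.vonMangoldt d

theorem good_aux (p : ℕ) (hp : p.Prime) (h11 : 11 < p) (E : ℕ) (hE : p ∉ BadE E)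
    (hbig : 74999.25 * Real.log p < 90000 * (5 * Real.log ((E + 1 : ℕ) : ℝ)) - 99999 * Cvm) :
    ∃ e : Fin 5 → Fin 10, e ≠ 0 ∧ ∃ m n : ℕ, 0 < m ∧ 0 < n ∧
      p ∣ (∏ i, fiveP i ^ (e i : ℕ)) ^ m + (∏ i, fiveP i ^ (e i : ℕ)) ^ n + 1 := by
  have : Fact p.Prime := ⟨hp⟩
  have hcop : ∀ i, Nat.Coprime (fiveP i) p := fun i =>
    (Nat.coprime_primes (fiveP_prime i) hp).mpr (by have := fiveP_le i; omega)
  let g : Fin 5 → (ZMod p)ˣ := fun i => ZMod.unitOfCoprime (fiveP i) (hcop i)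
  have hg : ∀ i, (g i : ZMod p) = (fiveP i : ZMod p) := fun i => ZMod.coe_unitOfCoprime _ _
  let K := Subgroup.closure (Set.range g)
  have hcard : (E + 1) ^ 5 ≤ Nat.card K := by
    by_contra h
    exact hE (mem_BadE p E g hg (not_le.mp h))
  let g' : Fin 5 → K := fun i => ⟨g i, Subgroup.subset_closure ⟨i, rfl⟩⟩
  have hg' : Subgroup.closure (Set.range g') = ⊤ := by
    have := Subgroup.closure_closure_coe_preimage (k := Set.range g)
    rw [← this]
    congr 1
    ext ⟨x, hx⟩
    simp [g', Subtype.ext_iff]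
  obtain ⟨e, he, hord⟩ := ord_aux g' hg'
  refine ⟨e, he, ?_⟩
  set a : (ZMod p)ˣ := ∏ i, g i ^ (e i : ℕ) with ha
  have hao : orderOf (∏ i, g' i ^ (e i : ℕ)) = orderOf a := by
    rw [← Subgroup.orderOf_coe, ha]
    congr 1
  rw [hao] at hord
  have hC : (∑ d ∈ Finset.range 10, ArithmeticFunction.vonMangoldt d) = Cvm := rfl
  rw [hC] at hord
  have hTpos : 0 < orderOf a := orderOf_pos a
  have hlogN : 5 * Real.log ((E + 1 : ℕ) : ℝ) ≤ Real.log (Nat.card K) := by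
    have h1 : 5 * Real.log ((E + 1 : ℕ) : ℝ) = Real.log (((E + 1) ^ 5 : ℕ) : ℝ) := by
      rw [Nat.cast_pow, Real.log_pow]; norm_num
    rw [h1]
    apply Real.log_le_log
    · exact_mod_cast (by positivity)
    · exact_mod_cast hcard
  have hlt : 3 * Real.log p < 4 * Real.log (orderOf a) := by
    have : 74999.25 * Real.log p < 99999 * Real.log (orderOf a) := by
      have := hord
      change 90000 * Real.log (Nat.card K) - 99999 * Cvm ≤ _ at this
      linarith
    linarith
  have hT : p ^ 3 < (Nat.card (Subgroup.zpowers a)) ^ 4 := by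
    rw [Nat.card_zpowers]
    have h1 : Real.log ((p ^ 3 : ℕ) : ℝ) < Real.log ((orderOf a ^ 4 : ℕ) : ℝ) := by
      rw [Nat.cast_pow, Nat.cast_pow, Real.log_pow, Real.log_pow]
      push_cast
      linarith
    have h2 := (Real.log_lt_log_iff (by exact_mod_cast (pow_pos hp.pos 3))
      (by exact_mod_cast (pow_pos hTpos 4))).mp h1
    exact_mod_cast h2
  obtain ⟨u, hu, v, hv, huv⟩ := inc_aux p (Subgroup.zpowers a) hT
  have hpos : ∀ u ∈ Subgroup.zpowers a, ∃ m : ℕ, 0 < m ∧ a ^ m = u := by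
    intro u hu
    obtain ⟨m, rfl⟩ := (mem_powers_iff_mem_zpowers.mpr hu)
    exact ⟨m + orderOf a, by omega, by simp only [pow_add, pow_orderOf_eq_one, mul_one]⟩
  obtain ⟨m, hm, rfl⟩ := hpos u hu
  obtain ⟨n, hn, rfl⟩ := hpos v hv
  refine ⟨m, n, hm, hn, ?_⟩
  rw [← ZMod.natCast_eq_zero_iff]
  have hav : (a : ZMod p) = ((∏ i, fiveP i ^ (e i : ℕ) : ℕ) : ZMod p) := by
    rw [ha, Units.coe_prod]
    push_cast
    simp only [hg]
  rw [Units.val_pow_eq_pow_val, Units.val_pow_eq_pow_val, hav] at huv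
  rw [← huv]
  simp only [Nat.cast_add, Nat.cast_pow, Nat.cast_one]

theorem mem_div (e : Fin 5 → Fin 10) (he : e ≠ 0) :
    (∏ i, fiveP i ^ (e i : ℕ)) ∈
      ((2 * 3 * 5 * 7 * 11 : ℕ) ^ 9).divisors.filter (fun d => 1 < d) := by
  have h0 : (2 * 3 * 5 * 7 * 11 : ℕ) = ∏ i, fiveP i := by
    simp [fiveP, Fin.prod_univ_succ]
  rw [h0]
  rw [Finset.mem_filter, Nat.mem_divisors]
  refine ⟨⟨?_, ?_⟩, ?_⟩
  · rw [← Finset.prod_pow]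
    exact Finset.prod_dvd_prod_of_dvd _ _ fun i _ => pow_dvd_pow _ (by have := (e i).2; omega)
  · exact pow_ne_zero _ (Finset.prod_ne_zero_iff.mpr fun i _ => (fiveP_prime i).ne_zero)
  · have hpos : 0 < ∏ i, fiveP i ^ (e i : ℕ) :=
      Finset.prod_pos fun i _ => pow_pos (fiveP_prime i).pos _
    by_contra h
    have h1 : ∏ i, fiveP i ^ (e i : ℕ) = 1 := by omega
    apply he
    funext j
    have := fact_aux (fun i => (e i : ℕ)) j
    rw [h1] at this
    simp at this
    exact Fin.ext this.symm

/-- The exceptional set in the statement. -/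
def excSet (x : ℝ) : Set ℕ := {p : ℕ |
        Nat.Prime p ∧ (p : ℝ) ≤ x ∧
        ¬ ∃ m n : ℕ, 0 < m ∧ 0 < n ∧
            p ∣ ∏ d ∈ ((2 * 3 * 5 * 7 * 11 : ℕ) ^ 9).divisors.filter (fun d => 1 < d),
              (d ^ m + d ^ n + 1)}

theorem exc_bound : ∃ K : ℝ, ∀ x : ℝ, 1 ≤ x →
    (Nat.card (excSet x) : ℝ) ≤ K + 2916 * x ^ (1 - 6 / 1000000 : ℝ) := by
  obtain ⟨p0, hp0⟩ : ∃ p0 : ℕ, ∀ p : ℕ, p0 ≤ p → 99999 * Cvm < 0.3 * Real.log p := by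
    have h : Tendsto (fun p : ℕ => 0.3 * Real.log (p : ℝ)) atTop atTop :=
      (Real.tendsto_log_atTop.comp tendsto_natCast_atTop_atTop).const_mul_atTop (by norm_num)
    exact eventually_atTop.mp (h.eventually_gt_atTop _)
  refine ⟨((p0 + 12 : ℕ) : ℝ), fun x hx => ?_⟩
  set θ : ℝ := 1 / 6 - 1 / 1000000 with hθ
  set E := ⌊x ^ θ⌋₊ with hEdef
  have hx0 : 0 < x := by linarith
  have hxθ : 1 ≤ x ^ θ := Real.one_le_rpow hx (by rw [hθ]; norm_num)
  have hEle : (E : ℝ) ≤ x ^ θ := Nat.floor_le (by linarith)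
  have hElt : x ^ θ < E + 1 := Nat.lt_floor_add_one _
  have hsub : excSet x ⊆ ((Finset.range (p0 + 12) ∪ BadE E : Finset ℕ) : Set ℕ) := by
    rintro p ⟨hp, hpx, hno⟩
    by_contra hmem
    rw [Finset.mem_coe, Finset.mem_union, Finset.mem_range, not_or] at hmem
    obtain ⟨h1, h2⟩ := hmem
    have hppos : (0:ℝ) < p := by exact_mod_cast hp.pos
    have hlogp := hp0 p (by omega)
    have hlogE : θ * Real.log p ≤ Real.log ((E + 1 : ℕ) : ℝ) := by
      rw [← Real.log_rpow hppos]
      apply Real.log_le_log (Real.rpow_pos_of_pos hppos _)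
      have : (p:ℝ) ^ θ ≤ x ^ θ := Real.rpow_le_rpow hppos.le hpx (by rw [hθ]; norm_num)
      push_cast
      linarith
    obtain ⟨e, he, m, n, hm, hn, hdvd⟩ := good_aux p hp (by omega) E h2 (by
      rw [hθ] at hlogE
      linarith)
    exact hno ⟨m, n, hm, hn, hdvd.trans
      (Finset.dvd_prod_of_mem (fun d => d ^ m + d ^ n + 1) (mem_div e he))⟩
  have hc : Nat.card (excSet x) ≤ (p0 + 12) + (2 * E + 1) ^ 5 * (12 * E) := by
    have h1 := Set.ncard_le_ncard hsub (Finset.finite_toSet _)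
    rw [Set.ncard_coe_finset] at h1
    have h2 := Finset.card_union_le (Finset.range (p0 + 12)) (BadE E)
    rw [Finset.card_range] at h2
    have h3 := BadE_card E
    rw [Nat.card_coe_set_eq]
    omega
  have hc' : (Nat.card (excSet x) : ℝ) ≤ ((p0 + 12 : ℕ) : ℝ) + (2 * (E:ℝ) + 1) ^ 5 * (12 * E) := by
    exact_mod_cast hc
  have hpow : (x ^ θ) ^ 6 = x ^ (1 - 6 / 1000000 : ℝ) := by
    rw [← Real.rpow_natCast, ← Real.rpow_mul hx0.le]
    congr 1
    rw [hθ]; norm_num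
  have hb : (2 * (E:ℝ) + 1) ^ 5 * (12 * E) ≤ (3 * x ^ θ) ^ 5 * (12 * x ^ θ) := by
    gcongr
    linarith
  have hb2 : (3 * x ^ θ) ^ 5 * (12 * x ^ θ) = 2916 * (x ^ θ) ^ 6 := by ring
  rw [← hpow, ← hb2]
  linarith

theorem exc_littleO :
    (fun x : ℝ => (Nat.card (excSet x) : ℝ)) =o[atTop] (fun x : ℝ => x / Real.log x) := by
  obtain ⟨K, hK⟩ := exc_bound
  have h1 : (fun x : ℝ => (Nat.card (excSet x) : ℝ)) =O[atTop]
      (fun x : ℝ => x ^ (1 - 6 / 1000000 : ℝ)) := by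
    refine IsBigO.of_bound (|K| + 2916) ?_
    filter_upwards [eventually_ge_atTop 1] with x hx
    have h2 : 1 ≤ x ^ (1 - 6 / 1000000 : ℝ) := Real.one_le_rpow hx (by norm_num)
    rw [Real.norm_of_nonneg (Nat.cast_nonneg _), Real.norm_of_nonneg (by linarith)]
    have := hK x hx
    have h3 := le_abs_self K
    have h4 := abs_nonneg K
    nlinarith
  refine h1.trans_isLittleO ?_
  have h5 : (fun x : ℝ => x ^ (1 - 6 / 1000000 : ℝ) * Real.log x) =o[atTop]
      (fun x : ℝ => x ^ (1 - 6 / 1000000 : ℝ) * x ^ (6 / 1000000 : ℝ)) :=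
    (isBigO_refl _ _).mul_isLittleO (isLittleO_log_rpow_atTop (by norm_num))
  have h6 := h5.mul_isBigO (isBigO_refl (fun x : ℝ => (Real.log x)⁻¹) atTop)
  refine h6.congr' ?_ ?_
  · filter_upwards [eventually_gt_atTop 1] with x hx
    have := Real.log_pos hx
    field_simp
  · filter_upwards [eventually_gt_atTop 1] with x hx
    rw [← Real.rpow_add (by linarith)]
    norm_num [div_eq_mul_inv]

/-- **Corollary (Skałba variant).** Let `A = (2·3·5·7·11)^9`. For almost all primes
`p`, there are positive integers `m, n` such that `p` divides
`∏_{a ∣ A, a > 1} (a^m + a^n + 1)`. -/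
theorem stmt_5 :
    (fun x : ℝ => (Nat.card {p : ℕ |
        Nat.Prime p ∧ (p : ℝ) ≤ x ∧
        ¬ ∃ m n : ℕ, 0 < m ∧ 0 < n ∧
            p ∣ ∏ d ∈ ((2 * 3 * 5 * 7 * 11 : ℕ) ^ 9).divisors.filter (fun d => 1 < d),
              (d ^ m + d ^ n + 1)} : ℝ))
      =o[atTop] (fun x : ℝ => x / Real.log x) :=
  exc_littleO
end

section
/- Let p be a prime and let a be an integer not divisible by p. If ℓ_a(p) > p^{3/4}, then there exist positive integers m and n such that p divides a^m + a^n + 1. -/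
open Finset in
lemma line_card {p : ℕ} [Fact p.Prime] (s : ZMod p × ZMod p) (hs : s.2 ≠ 0) :
    (∑ q : ZMod p × ZMod p, if q.1 * s.1 + q.2 * s.2 = -1 then (1:ℤ) else 0) = p := by
  rw [Fintype.sum_prod_type]
  have : ∀ u : ZMod p, (∑ v : ZMod p, if u * s.1 + v * s.2 = -1 then (1:ℤ) else 0) = 1 := by
    intro u
    have h : ∀ v : ZMod p, (u * s.1 + v * s.2 = -1) ↔ v = (-1 - u * s.1) / s.2 := by
      intro v
      rw [eq_div_iff hs]
      constructor <;> intro h <;> linear_combination h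
    simp [h]
  simp [this, ZMod.card]

open Finset in
lemma pair_card {p : ℕ} [Fact p.Prime] (s s' : ZMod p × ZMod p) (hs : s.2 ≠ 0) :
    (∑ q : ZMod p × ZMod p, (if q.1 * s.1 + q.2 * s.2 = -1 then (1:ℤ) else 0) *
      (if q.1 * s'.1 + q.2 * s'.2 = -1 then (1:ℤ) else 0)) ≤ 1 + if s = s' then (p:ℤ) else 0 := by
  by_cases hss : s = s'
  · subst hss
    have h := line_card s hs
    have : ∀ q : ZMod p × ZMod p, (if q.1 * s.1 + q.2 * s.2 = -1 then (1:ℤ) else 0) *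
      (if q.1 * s.1 + q.2 * s.2 = -1 then (1:ℤ) else 0) =
      (if q.1 * s.1 + q.2 * s.2 = -1 then (1:ℤ) else 0) := by
      intro q; split_ifs <;> simp
    simp only [this, h, if_true]
    omega
  · simp only [hss, if_false, add_zero]
    have : ∀ q : ZMod p × ZMod p, (if q.1 * s.1 + q.2 * s.2 = -1 then (1:ℤ) else 0) *
      (if q.1 * s'.1 + q.2 * s'.2 = -1 then (1:ℤ) else 0) =
      (if q.1 * s.1 + q.2 * s.2 = -1 ∧ q.1 * s'.1 + q.2 * s'.2 = -1 then (1:ℤ) else 0) := by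
      intro q; split_ifs <;> simp_all
    simp only [this]
    rw [Finset.sum_boole]
    refine Nat.cast_le_one.mpr ?_
    rw [Finset.card_le_one]
    rintro ⟨u, v⟩ h1 ⟨u', v'⟩ h2
    simp only [mem_filter, mem_univ, true_and] at h1 h2
    obtain ⟨h1, h1'⟩ := h1
    obtain ⟨h2, h2'⟩ := h2
    have hdet : s.1 * s'.2 - s'.1 * s.2 ≠ 0 := by
      intro hd
      have e2 : s.2 = s'.2 := by linear_combination (-s'.2) * h1 + s.2 * h1' + u * hd
      have e1 : s.1 = s'.1 := by
        apply mul_right_cancel₀ hs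
        rw [← e2] at hd
        linear_combination hd
      exact hss (Prod.ext e1 e2)
    have hu : u = u' := by
      apply mul_right_cancel₀ hdet
      linear_combination s'.2 * (h1 - h2) - s.2 * (h1' - h2')
    have hv : v = v' := by
      subst hu
      apply mul_right_cancel₀ hs
      linear_combination h1 - h2
    rw [hu, hv]

open Finset in
lemma key_bound {p : ℕ} [Fact p.Prime] (S : Finset (ZMod p × ZMod p))
    (hS : ∀ s ∈ S, s.2 ≠ 0)
    (hno : ∀ q ∈ S, ∀ s ∈ S, q.1 * s.1 + q.2 * s.2 ≠ -1) : #S ^ 2 ≤ p ^ 3 := by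
  set A : ZMod p × ZMod p → ZMod p × ZMod p → ℤ :=
    fun q s => if q.1 * s.1 + q.2 * s.2 = -1 then (1:ℤ) else 0 with hA
  set N : ℤ := (#S : ℤ) with hN
  have hp0 : (0:ℤ) ≤ p := by positivity
  have hcard : (∑ _q : ZMod p × ZMod p, (1:ℤ)) = (p:ℤ)^2 := by
    simp [ZMod.card, sq]
  have h1 : ∑ q, ∑ s ∈ S, A q s = N * p := by
    rw [sum_comm, sum_congr rfl (fun s hs => line_card s (hS s hs))]
    simp [hN]
  have h2 : ∑ q, (∑ s ∈ S, A q s) ^ 2 ≤ N ^ 2 + N * p := by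
    have : ∑ q, (∑ s ∈ S, A q s) ^ 2 = ∑ s ∈ S, ∑ s' ∈ S, ∑ q, A q s * A q s' := by
      simp only [sq, sum_mul_sum]
      rw [sum_comm]
      refine sum_congr rfl fun s _ => ?_
      rw [sum_comm]
    rw [this]
    calc _ ≤ ∑ s ∈ S, ∑ s' ∈ S, (1 + if s = s' then (p:ℤ) else 0) :=
          sum_le_sum fun s hs => sum_le_sum fun s' _ => pair_card s s' (hS s hs)
      _ = N ^ 2 + N * p := by
          have : ∀ s ∈ S, ∑ s' ∈ S, (1 + if s = s' then (p:ℤ) else 0) = N + p := by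
            intro s hs
            rw [sum_add_distrib, sum_ite_eq]
            simp [hs, hN]
          rw [sum_congr rfl this]
          simp [← hN]; ring
  have h3 : ∑ q, ((p:ℤ) * (∑ s ∈ S, A q s) - N) ^ 2 ≤ (p:ℤ)^3 * N := by
    have : ∑ q, ((p:ℤ) * (∑ s ∈ S, A q s) - N) ^ 2 =
        (p:ℤ)^2 * ∑ q, (∑ s ∈ S, A q s) ^ 2 - 2 * p * N * ∑ q, ∑ s ∈ S, A q s
          + N ^ 2 * ∑ _q : ZMod p × ZMod p, (1:ℤ) := by
      rw [mul_sum, mul_sum univ (fun q => ∑ s ∈ S, A q s), mul_sum univ (fun _ => (1:ℤ)),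
        ← sum_sub_distrib, ← sum_add_distrib]
      exact sum_congr rfl fun q _ => by ring
    rw [this, h1, hcard]
    nlinarith [mul_le_mul_of_nonneg_left h2 (sq_nonneg (p:ℤ))]
  have h4 : N * N ^ 2 ≤ ∑ q, ((p:ℤ) * (∑ s ∈ S, A q s) - N) ^ 2 := by
    calc N * N ^ 2 = ∑ q ∈ S, ((p:ℤ) * (∑ s ∈ S, A q s) - N) ^ 2 := by
          have : ∀ q ∈ S, ((p:ℤ) * (∑ s ∈ S, A q s) - N) ^ 2 = N ^ 2 := by
            intro q hq
            rw [sum_eq_zero fun s hs => if_neg (hno q hq s hs)]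
            ring
          rw [sum_congr rfl this]
          simp [← hN]
      _ ≤ _ := sum_le_sum_of_subset_of_nonneg (subset_univ _) fun _ _ _ => sq_nonneg _
  have h5 : N * N ^ 2 ≤ N * (p:ℤ) ^ 3 := by linarith
  rcases Nat.eq_zero_or_pos #S with h0 | hpos
  · simp [h0]
  · have : N ^ 2 ≤ (p:ℤ)^3 := le_of_mul_le_mul_left h5 (by omega)
    rw [hN] at this
    exact_mod_cast this

/-- **Skałba's lemma.** Let `p` be a prime and `a` an integer not divisible by `p`.
If the multiplicative order of `a` mod `p` exceeds `p^(3/4)`, then `p` divides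
`a^m + a^n + 1` for some positive integers `m, n`. -/
theorem stmt_10 (p : ℕ) (hp : Nat.Prime p) (a : ℤ) (hpa : ¬ (p : ℤ) ∣ a)
    (h : (p : ℝ) ^ ((3 : ℝ) / 4) < (orderOf ((a : ZMod p)) : ℝ)) :
    ∃ m n : ℕ, 0 < m ∧ 0 < n ∧ (p : ℤ) ∣ a ^ m + a ^ n + 1 := by
  haveI : Fact p.Prime := ⟨hp⟩
  by_contra hcon
  have hno : ∀ m n : ℕ, 0 < m → 0 < n → (a : ZMod p) ^ m + (a : ZMod p) ^ n ≠ -1 := by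
    intro m n hm hn he
    refine hcon ⟨m, n, hm, hn, ?_⟩
    rw [← ZMod.intCast_zmod_eq_zero_iff_dvd _ p]
    push_cast
    rw [he]; ring
  have ha : (a : ZMod p) ≠ 0 := by
    rwa [Ne, ZMod.intCast_zmod_eq_zero_iff_dvd _ p]
  set b : ZMod p := (a : ZMod p) with hb
  set t := orderOf b with ht
  set H : Finset (ZMod p) := (Finset.range t).image (fun i => b ^ (i + 1)) with hH
  have hcard : H.card = t := by
    rw [hH, Finset.card_image_of_injOn, Finset.card_range]
    intro i hi j hj hij
    simp only [Finset.coe_range, Set.mem_Iio] at hi hj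
    simp only [pow_succ] at hij
    exact pow_injOn_Iio_orderOf hi hj (mul_right_cancel₀ ha hij)
  have hk := key_bound (H ×ˢ H) (by
      rintro ⟨x, y⟩ hxy
      simp only [hH, Finset.mem_product, Finset.mem_image] at hxy
      obtain ⟨_, i, _, rfl⟩ := hxy
      exact pow_ne_zero _ ha) (by
      rintro ⟨x, y⟩ hxy ⟨u, v⟩ huv
      simp only [hH, Finset.mem_product, Finset.mem_image] at hxy huv
      obtain ⟨⟨i, _, rfl⟩, j, _, rfl⟩ := hxy
      obtain ⟨⟨k, _, rfl⟩, l, _, rfl⟩ := huv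
      simp only [← pow_add]
      exact hno _ _ (by omega) (by omega))
  rw [Finset.card_product, hcard] at hk
  have h4 : ((p : ℝ) ^ ((3 : ℝ) / 4)) ^ 4 < (t : ℝ) ^ 4 :=
    pow_lt_pow_left₀ h (by positivity) (by norm_num)
  rw [← Real.rpow_natCast, ← Real.rpow_mul (by positivity)] at h4
  have e : (3:ℝ) / 4 * ((4:ℕ):ℝ) = ((3:ℕ):ℝ) := by norm_num
  rw [e, Real.rpow_natCast] at h4
  have h5 : p ^ 3 < t ^ 4 := by exact_mod_cast h4
  have : (t * t) ^ 2 = t ^ 4 := by ring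
  omega
end

section
/- Let p be a prime and let q be a prime with q > 3, q dividing p−1, and q² not dividing p−1. Let a and b be integers not divisible by p. If q divides ℓ_a(p)·ℓ_b(p), then q divides at least four of the five numbers ℓ_a(p), ℓ_b(p), ℓ_{ab}(p), ℓ_{a²b}(p), ℓ_{ab²}(p). -/
/-- Let `p` be a prime and `q` a prime with `q > 3`, `q ∣ p - 1`, `q² ∤ p - 1`. Let
`a, b` be integers not divisible by `p`. If `q ∣ ℓ_a(p)·ℓ_b(p)`, then `q` divides at
least four of the five numbers `ℓ_a(p), ℓ_b(p), ℓ_{ab}(p), ℓ_{a²b}(p), ℓ_{ab²}(p)`. -/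
theorem stmt_11 (p q : ℕ) (hp : Nat.Prime p) (hq : Nat.Prime q) (hq3 : 3 < q)
    (hqp : q ∣ p - 1) (hq2 : ¬ q ^ 2 ∣ p - 1) (a b : ℤ)
    (hpa : ¬ (p : ℤ) ∣ a) (hpb : ¬ (p : ℤ) ∣ b)
    (hdiv : q ∣ orderOf ((a : ZMod p)) * orderOf ((b : ZMod p))) :
    4 ≤ ([orderOf ((a : ZMod p)), orderOf ((b : ZMod p)),
          orderOf (((a * b : ℤ) : ZMod p)), orderOf (((a ^ 2 * b : ℤ) : ZMod p)),
          orderOf (((a * b ^ 2 : ℤ) : ZMod p))].countP (fun m => decide (q ∣ m))) := by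
  have : Fact p.Prime := ⟨hp⟩
  obtain ⟨N, hN⟩ := hqp
  have hqN : ¬ q ∣ N := by
    rintro ⟨k, rfl⟩
    exact hq2 ⟨k, by rw [hN]; ring⟩
  have key : ∀ x : ZMod p, x ≠ 0 → (q ∣ orderOf x ↔ x ^ N ≠ 1) := by
    intro x hx
    have h1 : orderOf x ∣ q * N := by
      rw [← hN]
      exact orderOf_dvd_of_pow_eq_one (ZMod.pow_card_sub_one_eq_one hx)
    constructor
    · intro h h2
      exact hqN (h.trans (orderOf_dvd_of_pow_eq_one h2))
    · intro h
      by_contra h2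
      have hc : Nat.Coprime (orderOf x) q := ((Nat.Prime.coprime_iff_not_dvd hq).2 h2).symm
      exact h (orderOf_dvd_iff_pow_eq_one.1 (hc.dvd_of_dvd_mul_left h1))
  have ha : (a : ZMod p) ≠ 0 := fun h => hpa ((ZMod.intCast_zmod_eq_zero_iff_dvd a p).1 h)
  have hb : (b : ZMod p) ≠ 0 := fun h => hpb ((ZMod.intCast_zmod_eq_zero_iff_dvd b p).1 h)
  have tors : ∀ (x : ZMod p) (k : ℕ), x ≠ 0 → 0 < k → k < q → (x ^ N) ^ k = 1 → x ^ N = 1 := by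
    intro x k hx hk hkq h
    have h1 : (x ^ N) ^ q = 1 := by
      rw [← pow_mul, mul_comm, ← hN]
      exact ZMod.pow_card_sub_one_eq_one hx
    have hc : Nat.Coprime q k :=
      (Nat.Prime.coprime_iff_not_dvd hq).2 (fun hd => absurd (Nat.le_of_dvd hk hd) (by omega))
    have h2 := Nat.dvd_gcd (orderOf_dvd_of_pow_eq_one h1) (orderOf_dvd_of_pow_eq_one h)
    rw [hc.gcd_eq_one] at h2
    exact orderOf_eq_one_iff.1 (Nat.dvd_one.1 h2)
  have ta2 := tors a 2 ha (by omega) (by omega)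
  have ta3 := tors a 3 ha (by omega) (by omega)
  have tb2 := tors b 2 hb (by omega) (by omega)
  have hor := (Nat.Prime.dvd_mul hq).1 hdiv
  rw [key _ ha, key _ hb] at hor
  push_cast
  simp only [List.countP_cons, List.countP_nil, decide_eq_true_eq, key _ ha, key _ hb,
    key _ (mul_ne_zero ha hb), key _ (mul_ne_zero (pow_ne_zero 2 ha) hb),
    key _ (mul_ne_zero ha (pow_ne_zero 2 hb)), mul_pow, pow_right_comm _ 2 N]
  have hA : (a : ZMod p) ^ N ≠ 0 := pow_ne_zero _ ha
  have hB : (b : ZMod p) ^ N ≠ 0 := pow_ne_zero _ hb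
  generalize (a : ZMod p) ^ N = A at *
  generalize (b : ZMod p) ^ N = B at *
  clear key tors
  have h12 : A = 1 → B ≠ 1 := by tauto
  have h13 : A = 1 → A * B ≠ 1 := by rintro rfl; simpa using h12
  have h14 : A = 1 → A ^ 2 * B ≠ 1 := by rintro rfl; simpa using h12
  have h15 : A = 1 → A * B ^ 2 ≠ 1 := by
    rintro rfl h
    exact h12 rfl (tb2 (by simpa using h))
  have h23 : B = 1 → A * B ≠ 1 := by
    rintro rfl h
    exact h12 (by simpa using h) rfl
  have h24 : B = 1 → A ^ 2 * B ≠ 1 := by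
    rintro rfl h
    exact h12 (ta2 (by simpa using h)) rfl
  have h25 : B = 1 → A * B ^ 2 ≠ 1 := by
    rintro rfl h
    exact h12 (by simpa using h) rfl
  have h34 : A * B = 1 → A ^ 2 * B ≠ 1 := by
    intro h h'
    exact h13 (by linear_combination h' - A * h) h
  have h35 : A * B = 1 → A * B ^ 2 ≠ 1 := by
    intro h h'
    exact h23 (by linear_combination h' - B * h) h
  have h45 : A ^ 2 * B = 1 → A * B ^ 2 ≠ 1 := by
    intro h h'
    have hAB : A = B := by
      apply mul_left_cancel₀ (mul_ne_zero hA hB)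
      linear_combination h - h'
    subst hAB
    have h1 := ta3 (by linear_combination h)
    exact h12 h1 h1
  clear ta2 ta3 tb2 hor hA hB hdiv
  by_cases h1 : A = 1
  · rw [if_pos (h12 h1), if_pos (h13 h1), if_pos (h14 h1), if_pos (h15 h1)]
    omega
  rw [if_pos h1]
  by_cases h2 : B = 1
  · rw [if_pos (h23 h2), if_pos (h24 h2), if_pos (h25 h2)]
    omega
  rw [if_pos h2]
  by_cases h3 : A * B = 1
  · rw [if_pos (h34 h3), if_pos (h35 h3)]
    omega
  rw [if_pos h3]
  by_cases h4 : A ^ 2 * B = 1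
  · rw [if_pos (h45 h4)]
    omega
  rw [if_pos h4]
  omega
end

section
/- Let p be a prime, N a positive integer, and q a prime with q > N, q dividing p−1, and q² not dividing p−1. Let a_1,…,a_k be integers not divisible by p, and suppose q divides ℓ_{a_i}(p) for some i. Then the number of tuples (e_1,…,e_k) of integers with 0 ≤ e_j < N for each j, not all e_j = 0, such that q does not divide ℓ_{a_1^{e_1}⋯a_k^{e_k}}(p), is at most N^{k−1} − 1. -/
/-- Let `p` be a prime, `N` a positive integer, and `q` a prime with `q > N`,
`q ∣ p - 1`, `q² ∤ p - 1`. Let `a₁, …, a_k` be integers not divisible by `p`, and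
suppose `q ∣ ℓ_{aᵢ}(p)` for some `i`. Then the number of tuples `(e₁, …, e_k)` with
`0 ≤ eⱼ < N`, not all `eⱼ = 0`, such that `q ∤ ℓ_{a₁^{e₁}⋯a_k^{e_k}}(p)`, is at most
`N^{k-1} - 1`. -/
theorem stmt_12 (p q N k : ℕ) (hp : Nat.Prime p) (hq : Nat.Prime q) (hN : 0 < N)
    (hqN : N < q) (hqp : q ∣ p - 1) (hq2 : ¬ q ^ 2 ∣ p - 1)
    (a : Fin k → ℤ) (hpa : ∀ i, ¬ (p : ℤ) ∣ a i)
    (hex : ∃ i, q ∣ orderOf ((a i : ZMod p))) :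
    ((Fintype.piFinset (fun _ : Fin k => Finset.range N)).filter (fun e =>
        (¬ ∀ j, e j = 0) ∧ ¬ q ∣ orderOf (((∏ i, a i ^ e i : ℤ) : ZMod p)))).card
      ≤ N ^ (k - 1) - 1 := by
  classical
  haveI : Fact p.Prime := ⟨hp⟩
  obtain ⟨i, hi⟩ := hex
  obtain ⟨n, rfl⟩ : ∃ n, k = n + 1 := ⟨k - 1, by have := i.pos; omega⟩
  obtain ⟨m, hm⟩ := hqp
  have hqm : ¬ q ∣ m := by
    rintro ⟨c, rfl⟩
    exact hq2 ⟨c, by rw [hm]; ring⟩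
  have ha0 : ∀ j, (a j : ZMod p) ≠ 0 := by
    intro j h
    exact hpa j ((ZMod.intCast_zmod_eq_zero_iff_dvd _ _).1 h)
  have key : ∀ x : ZMod p, x ≠ 0 → (¬ q ∣ orderOf x ↔ x ^ m = 1) := by
    intro x hx
    have h1 : orderOf x ∣ q * m := by
      rw [← hm]; exact orderOf_dvd_of_pow_eq_one (ZMod.pow_card_sub_one_eq_one hx)
    constructor
    · intro h
      exact orderOf_dvd_iff_pow_eq_one.1
        (Nat.Coprime.dvd_of_dvd_mul_left ((Nat.Prime.coprime_iff_not_dvd hq).2 h).symm h1)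
    · intro h h2
      exact hqm (h2.trans (orderOf_dvd_of_pow_eq_one h))
  have hb : orderOf ((a i : ZMod p) ^ m) = q := by
    haveI : Fact q.Prime := ⟨hq⟩
    apply orderOf_eq_prime
    · rw [← pow_mul, mul_comm, ← hm]; exact ZMod.pow_card_sub_one_eq_one (ha0 i)
    · intro h
      exact (key _ (ha0 i)).2 h hi
  set S := (Fintype.piFinset (fun _ : Fin (n + 1) => Finset.range N)).filter (fun e =>
        ¬ q ∣ orderOf (((∏ i, a i ^ e i : ℤ) : ZMod p))) with hS
  have hScard : S.card ≤ N ^ n := by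
    have hc : (Fintype.piFinset (fun _ : Fin n => Finset.range N)).card = N ^ n := by simp
    rw [← hc]
    have hpow : ∀ e ∈ S, ((a i : ZMod p) ^ m) ^ e i *
        (∏ j, (a (i.succAbove j) : ZMod p) ^ e (i.succAbove j)) ^ m = 1 := by
      intro e he
      have h := (Finset.mem_filter.1 he).2
      rw [key] at h
      · rw [← h]
        push_cast
        rw [Fin.prod_univ_succAbove _ i, mul_pow, ← pow_mul, ← pow_mul, mul_comm m]
      · push_cast
        exact Finset.prod_ne_zero_iff.2 fun j _ => pow_ne_zero _ (ha0 j)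
    apply Finset.card_le_card_of_injOn (fun e => fun j => e (i.succAbove j))
    · intro e he
      have h := Fintype.mem_piFinset.1 (Finset.mem_filter.1 he).1
      exact Fintype.mem_piFinset.2 fun j => h _
    · intro e he e' he' hee
      have hee' : ∀ j, e (i.succAbove j) = e' (i.succAbove j) := fun j => congrFun hee j
      have h1 := hpow e he
      have h2 := hpow e' he'
      simp only [hee'] at h1
      have h3 := mul_right_cancel₀ (right_ne_zero_of_mul_eq_one h2) (h1.trans h2.symm)
      have hl := Finset.mem_range.1 (Fintype.mem_piFinset.1 (Finset.mem_filter.1 he).1 i)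
      have hl' := Finset.mem_range.1 (Fintype.mem_piFinset.1 (Finset.mem_filter.1 he').1 i)
      have h4 : e i = e' i := by
        apply pow_injOn_Iio_orderOf (x := (a i : ZMod p) ^ m) _ _ h3
        · rw [hb]; exact hl.trans hqN
        · rw [hb]; exact hl'.trans hqN
      funext j
      rcases Fin.eq_self_or_eq_succAbove i j with rfl | ⟨j, rfl⟩
      · exact h4
      · exact hee' j
  have h0 : (fun _ => 0 : Fin (n + 1) → ℕ) ∈ S := by
    refine Finset.mem_filter.2 ⟨Fintype.mem_piFinset.2 fun _ => Finset.mem_range.2 hN, ?_⟩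
    simpa using hq.one_lt.ne'
  calc _ ≤ (S.erase (fun _ => 0)).card := by
        apply Finset.card_le_card
        intro e he
        obtain ⟨h1, h2, h3⟩ := Finset.mem_filter.1 he
        refine Finset.mem_erase.2 ⟨?_, Finset.mem_filter.2 ⟨h1, h3⟩⟩
        rintro rfl
        exact h2 fun _ => rfl
    _ = S.card - 1 := Finset.card_erase_of_mem h0
    _ ≤ _ := by simpa using Nat.sub_le_sub_right hScard 1
end

section
/- Fix an integer a with a ∉ {0, 1, −1}. Then, as x → ∞, the number of primes p ≤ x with ℓ_a(p) ≤ x^{1/2}/log x is o(x/log x). In particular, all but o(x/log x) primes p ≤ x satisfy ℓ_a(p) > p^{1/2}/log p. -/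
open Filter Asymptotics

lemma aux_count (a : ℤ) (h0 : a ≠ 0) (h1 : a ≠ 1) (h2 : a ≠ -1) (Y : ℕ) :
    ∃ S : Finset ℕ, (∀ p : ℕ, p.Prime → orderOf (a : ZMod p) ≤ Y → p ∈ S) ∧
      (S.card : ℝ) ≤ Real.log (a.natAbs) / Real.log 2 * ((Y : ℝ) + 1) ^ 2 := by
  have hA : 2 ≤ a.natAbs := by omega
  have hne : ∀ n : ℕ, n ≠ 0 → a ^ n - 1 ≠ 0 := by
    intro n hn h
    have h3 : a ^ n = 1 := by linarith
    have h4 : a.natAbs ^ n = 1 := by rw [← Int.natAbs_pow, h3]; rfl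
    have := Nat.one_lt_pow hn (show 1 < a.natAbs by omega)
    omega
  set N : ℤ := a * ∏ n ∈ Finset.range Y, (a ^ (n + 1) - 1) with hN
  have hN0 : N ≠ 0 := by
    rw [hN]
    refine mul_ne_zero h0 (Finset.prod_ne_zero_iff.2 fun n _ => hne _ (Nat.succ_ne_zero n))
  have hbound : N.natAbs ≤ a.natAbs ^ ((Y + 1) ^ 2) := by
    have hp : (∏ n ∈ Finset.range Y, (a ^ (n + 1) - 1)).natAbs ≤ (a.natAbs ^ (Y + 1)) ^ Y := by
      have e : (∏ n ∈ Finset.range Y, (a ^ (n + 1) - 1)).natAbs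
          = ∏ n ∈ Finset.range Y, (a ^ (n + 1) - 1).natAbs := map_prod Int.natAbsHom _ _
      rw [e]
      calc _ ≤ ∏ n ∈ Finset.range Y, a.natAbs ^ (Y + 1) := by
            apply Finset.prod_le_prod'
            intro n hn
            have hn' : n < Y := Finset.mem_range.1 hn
            have t1 : (a ^ (n + 1) - 1).natAbs ≤ a.natAbs ^ (n + 1) + 1 := by
              have := Int.natAbs_sub_le (a ^ (n + 1)) 1
              rw [Int.natAbs_pow] at this
              simpa using this
            have t2 : a.natAbs ^ (n + 1) + 1 ≤ a.natAbs ^ (n + 2) := by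
              have : 1 ≤ a.natAbs ^ (n + 1) := Nat.one_le_pow _ _ (by omega)
              calc _ ≤ a.natAbs ^ (n + 1) * 2 := by omega
                _ ≤ a.natAbs ^ (n + 1) * a.natAbs := Nat.mul_le_mul_left _ hA
                _ = _ := by ring
            exact (t1.trans t2).trans (Nat.pow_le_pow_right (by omega) (by omega))
        _ = _ := by simp
    rw [hN, Int.natAbs_mul]
    calc _ ≤ a.natAbs * (a.natAbs ^ (Y + 1)) ^ Y := Nat.mul_le_mul_left _ hp
      _ = a.natAbs ^ (1 + (Y + 1) * Y) := by rw [← pow_mul, pow_add _ 1, pow_one]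
      _ ≤ _ := Nat.pow_le_pow_right (by omega) (by nlinarith)
  refine ⟨N.natAbs.primeFactors, ?_, ?_⟩
  · intro p hp ho
    rw [Nat.mem_primeFactors]
    refine ⟨hp, ?_, Int.natAbs_ne_zero.2 hN0⟩
    rw [← Int.natCast_dvd]
    by_cases hpa : (p : ℤ) ∣ a
    · exact hpa.mul_right _
    · apply Dvd.dvd.mul_left
      have : Fact p.Prime := ⟨hp⟩
      have hz : (a : ZMod p) ≠ 0 := by
        rwa [Ne, ZMod.intCast_zmod_eq_zero_iff_dvd]
      have hpos : 0 < orderOf (a : ZMod p) := by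
        rw [orderOf_pos_iff, isOfFinOrder_iff_pow_eq_one]
        exact ⟨p - 1, Nat.sub_pos_of_lt hp.one_lt, ZMod.pow_card_sub_one_eq_one hz⟩
      have hd : (p : ℤ) ∣ a ^ ((orderOf (a : ZMod p) - 1) + 1) - 1 := by
        rw [Nat.sub_add_cancel hpos, ← ZMod.intCast_zmod_eq_zero_iff_dvd]
        push_cast
        rw [pow_orderOf_eq_one, sub_self]
      exact hd.trans (Finset.dvd_prod_of_mem (fun n => a ^ (n + 1) - 1)
        (Finset.mem_range.2 (by omega)))
  · have h3 : 2 ^ (N.natAbs.primeFactors.card) ≤ N.natAbs := by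
      calc _ ≤ ∏ p ∈ N.natAbs.primeFactors, p :=
            Finset.pow_card_le_prod _ _ _ fun p hp => (Nat.prime_of_mem_primeFactors hp).two_le
        _ ≤ _ := Nat.le_of_dvd (Int.natAbs_pos.2 hN0) (Nat.prod_primeFactors_dvd _)
    have h4 : ((2 : ℝ) ^ (N.natAbs.primeFactors.card)) ≤ (a.natAbs : ℝ) ^ ((Y + 1) ^ 2) := by
      exact_mod_cast h3.trans hbound
    have h5 := Real.log_le_log (by positivity) h4
    rw [Real.log_pow, Real.log_pow] at h5
    push_cast at h5 ⊢
    have hl : 0 < Real.log 2 := Real.log_pos (by norm_num)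
    rw [div_mul_eq_mul_div, le_div_iff₀ hl]
    linarith

lemma aux_card (a : ℤ) (h0 : a ≠ 0) (h1 : a ≠ 1) (h2 : a ≠ -1) (y : ℝ) (hy : 0 ≤ y)
    (T : Set ℕ) (hT : ∀ p ∈ T, p < 8 ∨ (p.Prime ∧ (orderOf (a : ZMod p) : ℝ) ≤ y)) :
    (Nat.card T : ℝ) ≤ Real.log (a.natAbs) / Real.log 2 * (2 * y ^ 2 + 2) + 8 := by
  obtain ⟨S, hS, hc⟩ := aux_count a h0 h1 h2 ⌊y⌋₊
  have hsub : T ⊆ ((S ∪ Finset.range 8 : Finset ℕ) : Set ℕ) := by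
    intro p hp
    rw [Finset.mem_coe, Finset.mem_union, Finset.mem_range]
    rcases hT p hp with h | ⟨hpp, ho⟩
    · exact Or.inr h
    · exact Or.inl (hS p hpp (Nat.le_floor ho))
  have hcard : Nat.card T ≤ S.card + 8 := by
    rw [Nat.card_coe_set_eq]
    calc _ ≤ ((S ∪ Finset.range 8 : Finset ℕ) : Set ℕ).ncard :=
          Set.ncard_le_ncard hsub (Finset.finite_toSet _)
      _ = (S ∪ Finset.range 8).card := Set.ncard_coe_finset _
      _ ≤ _ := by simpa using Finset.card_union_le S (Finset.range 8)
  have hcard' : (Nat.card T : ℝ) ≤ S.card + 8 := by exact_mod_cast hcard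
  have hf : (⌊y⌋₊ : ℝ) ≤ y := Nat.floor_le hy
  have hf0 : (0 : ℝ) ≤ ⌊y⌋₊ := Nat.cast_nonneg _
  have hC : 0 ≤ Real.log (a.natAbs) / Real.log 2 :=
    div_nonneg (Real.log_natCast_nonneg _) (Real.log_nonneg (by norm_num))
  have hq : ((⌊y⌋₊ : ℝ) + 1) ^ 2 ≤ 2 * y ^ 2 + 2 := by nlinarith [sq_nonneg (y - 1)]
  have := mul_le_mul_of_nonneg_left hq hC
  linarith

lemma aux_o (a : ℤ) (h0 : a ≠ 0) (h1 : a ≠ 1) (h2 : a ≠ -1) (T : ℝ → Set ℕ)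
    (hT : ∀ᶠ x : ℝ in atTop, ∀ p ∈ T x, p < 8 ∨ (p.Prime ∧
      (orderOf (a : ZMod p) : ℝ) ≤ x ^ ((1 : ℝ) / 2) / Real.log x)) :
    (fun x : ℝ => (Nat.card (T x) : ℝ)) =o[atTop] (fun x : ℝ => x / Real.log x) := by
  set C := Real.log (a.natAbs) / Real.log 2 with hC
  have hb : (fun x : ℝ => (Nat.card (T x) : ℝ)) =O[atTop]
      (fun x : ℝ => 2 * C * (x / Real.log x * (Real.log x)⁻¹) + (2 * C + 8)) := by
    apply IsBigO.of_bound 1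
    filter_upwards [hT, eventually_gt_atTop 1] with x hx hx1
    have hl : 0 < Real.log x := Real.log_pos hx1
    have := aux_card a h0 h1 h2 (x ^ ((1 : ℝ) / 2) / Real.log x) (by positivity) (T x) hx
    rw [div_pow, ← Real.sqrt_eq_rpow, Real.sq_sqrt (by linarith)] at this
    rw [one_mul, Real.norm_of_nonneg (Nat.cast_nonneg _)]
    refine le_trans (this.trans (le_of_eq ?_)) (Real.le_norm_self _)
    rw [hC]
    field_simp
    ring
  refine hb.trans_isLittleO ?_
  have hinf : Tendsto (fun x : ℝ => x / Real.log x) atTop atTop := by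
    have h := Real.isLittleO_log_id_atTop
    have h' := h.tendsto_div_nhds_zero
    have h3 : Tendsto (fun x : ℝ => Real.log x / x) atTop (nhdsWithin 0 (Set.Ioi 0)) := by
      refine tendsto_nhdsWithin_iff.2 ⟨h', ?_⟩
      filter_upwards [eventually_gt_atTop 1] with x hx
      exact div_pos (Real.log_pos hx) (by linarith)
    refine h3.inv_tendsto_nhdsGT_zero.congr fun x => ?_
    simp
  refine IsLittleO.add (IsLittleO.const_mul_left ?_ _) ?_
  · have h := (isBigO_refl (fun x : ℝ => x / Real.log x) atTop).mul_isLittleO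
      ((isLittleO_one_iff ℝ).2 Real.tendsto_log_atTop.inv_tendsto_atTop)
    simpa using h
  · rw [isLittleO_const_left]
    exact Or.inr (tendsto_norm_atTop_atTop.comp hinf)

/-- Fix an integer `a ∉ {0, ±1}`. The number of primes `p ≤ x` with
`ℓ_a(p) ≤ x^(1/2)/log x` is `o(x/log x)`; in particular, all but `o(x/log x)` of the
primes `p ≤ x` satisfy `ℓ_a(p) > p^(1/2)/log p`. -/
theorem stmt_13 (a : ℤ) (h0 : a ≠ 0) (h1 : a ≠ 1) (h2 : a ≠ -1) :
    ((fun x : ℝ => (Nat.card {p : ℕ |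
        Nat.Prime p ∧ (p : ℝ) ≤ x ∧
        (orderOf ((a : ZMod p)) : ℝ) ≤ x ^ ((1 : ℝ) / 2) / Real.log x} : ℝ))
      =o[atTop] (fun x : ℝ => x / Real.log x)) ∧
    ((fun x : ℝ => (Nat.card {p : ℕ |
        Nat.Prime p ∧ (p : ℝ) ≤ x ∧
        ¬ ((p : ℝ) ^ ((1 : ℝ) / 2) / Real.log p < (orderOf ((a : ZMod p)) : ℝ))} : ℝ))
      =o[atTop] (fun x : ℝ => x / Real.log x)) := by
  constructor
  · apply aux_o a h0 h1 h2
    filter_upwards with x p hp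
    exact Or.inr ⟨hp.1, hp.2.2⟩
  · apply aux_o a h0 h1 h2
    filter_upwards with x p hp
    obtain ⟨hpp, hpx, ho⟩ := hp
    by_cases h8 : p < 8
    · exact Or.inl h8
    · refine Or.inr ⟨hpp, (not_lt.1 ho).trans ?_⟩
      have hp8 : (8 : ℝ) ≤ p := by exact_mod_cast not_lt.1 h8
      have he : Real.exp 2 ≤ 8 := by
        have h := Real.exp_one_lt_d9
        have h' := Real.exp_pos 1
        have : Real.exp 2 = Real.exp 1 * Real.exp 1 := by rw [← Real.exp_add]; norm_num
        rw [this]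
        nlinarith
      have hm := Real.log_div_sqrt_antitoneOn (show Real.exp 2 ≤ (p : ℝ) by linarith)
        (show Real.exp 2 ≤ x by linarith) hpx
      have hlx : 0 < Real.log x := Real.log_pos (by linarith)
      have hsx : 0 < √x := Real.sqrt_pos.2 (by linarith)
      have := inv_anti₀ (div_pos hlx hsx) hm
      rw [inv_div, inv_div] at this
      rwa [← Real.sqrt_eq_rpow, ← Real.sqrt_eq_rpow]
end
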